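/- Let f be C²-smooth on an open neighbourhood of S^{n-1} with ∫ f dσ_{n-1} = 0, and suppose ∫∫ ⟨x,y⟩ f(x) f(y) dσ_{n-1}(x) dσ_{n-1}(y) ≤ b₀/n³ for some b₀ ≥ 0. If for some a ∈ ℝ and b ≥ 0 one has ‖f''(θ) − a I_n‖ ≤ 1 for every θ ∈ S^{n-1} and ∫ ‖f'' − a I_n‖²_HS dσ_{n-1} ≤ b², then ∫ exp{ ((n−1)/(4(1+b₀²+4b²))) · |f| } dσ_{n-1} ≤ 2. -/

import Mathlib

open MeasureTheory Metric Filter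
open scoped RealInnerProductSpace ENNReal NNReal

noncomputable section

namespace SecondOrderConc

/-- Euclidean space ℝⁿ. -/
abbrev E (n : ℕ) : Type := EuclideanSpace ℝ (Fin n)

/-- The uniform (normalized rotation-invariant) probability measure `σ_{n-1}`
on the unit sphere `S^{n-1}`, viewed as a measure on the ambient space ℝⁿ. -/
def sphMeasure (n : ℕ) : Measure (E n) :=
  ((((volume : Measure (E n)).toSphere).map Subtype.val) Set.univ)⁻¹ •
    (((volume : Measure (E n)).toSphere).map Subtype.val)

variable {n : ℕ}

/-- Euclidean Hessian of `f` at `x`, as a continuous linear operator on ℝⁿ. -/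
def hess (f : E n → ℝ) (x : E n) : E n →L[ℝ] E n :=
  fderiv ℝ (gradient f) x

/-- Squared Hilbert–Schmidt norm of an operator on ℝⁿ. -/
def hsNormSq (A : E n →L[ℝ] E n) : ℝ :=
  ∑ i : Fin n, ‖A (EuclideanSpace.single i 1)‖ ^ 2

/-- Orthogonal projection of ℝⁿ onto `θ^⊥` (for a unit vector `θ`). -/
def projPerp (θ : E n) : E n →L[ℝ] E n :=
  ContinuousLinearMap.id ℝ (E n) - (innerSL ℝ θ).smulRight θ

/-- Spherical gradient `∇_S f(θ) = ∇f(θ) − ⟨∇f(θ),θ⟩θ`. -/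
def sgrad (f : E n → ℝ) (θ : E n) : E n :=
  gradient f θ - ⟪gradient f θ, θ⟫ • θ

/-- Spherical Hessian `f''_S(θ) = P_{θ^⊥} (f''(θ) − ⟨∇f(θ),θ⟩ I_n) P_{θ^⊥}`. -/
def sHess (f : E n → ℝ) (θ : E n) : E n →L[ℝ] E n :=
  (projPerp θ).comp
    ((hess f θ - ⟪gradient f θ, θ⟫ • ContinuousLinearMap.id ℝ (E n)).comp (projPerp θ))

/-- Spherical Laplacian `Δ_S f(θ) = Tr f''_S(θ)`. -/
def sLap (f : E n → ℝ) (θ : E n) : ℝ :=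
  LinearMap.trace ℝ (E n) (sHess f θ).toLinearMap

/-- Euclidean Laplacian `Δ f = Tr f''`. -/
def eLap (f : E n → ℝ) (x : E n) : ℝ :=
  LinearMap.trace ℝ (E n) (hess f x).toLinearMap

/-- 0-homogeneous extension to `ℝⁿ \ {0}` of (the restriction to the sphere of) `g`. -/
def ext0 (g : E n → ℝ) : E n → ℝ := fun x => g (‖x‖⁻¹ • x)

/-!
Subtracting `a / 2 * ‖x‖ ^ 2` from `f` changes it only by a constant on the sphere and reduces the
theorem to a function `F` with `‖hess F‖ ≤ 1` there. For such `F` the function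
`q = ‖gradient F‖ ^ 2` satisfies `‖sgrad q‖ ^ 2 ≤ 4 * q`. The logarithmic Sobolev inequality on the
sphere then controls the exponential moments of `q` by its mean (Herbst's argument), and, through
the variational formula for the entropy, those of `F - ∫ F`. The mean of `q` is small: the Poincaré
inequality bounds the variance of `gradient F` by the Hilbert–Schmidt norm of the Hessian, and the
mean of `gradient F` is, up to an error of the same kind, `n • ∫ F θ • θ`, whose squared norm is
`n ^ 2` times the correlation in the hypothesis.

On the sphere the logarithmic Sobolev inequality, with constant `n - 2` in place of `n - 1`, and
the Poincaré inequality are obtained by applying their Gaussian counterparts to functions of the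
form `ρ (‖x‖) * w (x / ‖x‖)`; the loss comes from `∫ ‖x‖⁻²`. It excludes the circle, where
`F - ∫ F` is bounded directly. The Gaussian logarithmic Sobolev inequality follows by halving the
variance repeatedly: entropy is subadditive over the product of two independent Gaussian variables,
and an entropy at small variance is at most quadratic in the increments of the function.
-/

section HasBochnerIntegral

variable {Ω : Type*} [MeasurableSpace Ω] {μ : Measure Ω} {f g : Ω → ℝ} {u v : ℝ}

/-- `f` is `μ`-integrable with integral `v`. As `HasSum` does for series, this carries integrability
along when the integral of a linear combination is computed. -/
def HasBochnerIntegral (μ : Measure Ω) (f : Ω → ℝ) (v : ℝ) : Prop :=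
  Integrable f μ ∧ ∫ x, f x ∂μ = v

namespace HasBochnerIntegral

lemma of_integrable (hf : Integrable f μ) : HasBochnerIntegral μ f (∫ x, f x ∂μ) :=
  ⟨hf, rfl⟩

lemma const [IsProbabilityMeasure μ] (c : ℝ) : HasBochnerIntegral μ (fun _ ↦ c) c :=
  ⟨integrable_const c, by simp⟩

lemma add (hf : HasBochnerIntegral μ f u) (hg : HasBochnerIntegral μ g v) :
    HasBochnerIntegral μ (fun x ↦ f x + g x) (u + v) :=
  ⟨hf.1.add hg.1, by rw [integral_add hf.1 hg.1, hf.2, hg.2]⟩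

lemma sub (hf : HasBochnerIntegral μ f u) (hg : HasBochnerIntegral μ g v) :
    HasBochnerIntegral μ (fun x ↦ f x - g x) (u - v) :=
  ⟨hf.1.sub hg.1, by rw [integral_sub hf.1 hg.1, hf.2, hg.2]⟩

lemma const_mul (hf : HasBochnerIntegral μ f u) (c : ℝ) :
    HasBochnerIntegral μ (fun x ↦ c * f x) (c * u) :=
  ⟨hf.1.const_mul c, by rw [integral_const_mul, hf.2]⟩

lemma mono_ae (hf : HasBochnerIntegral μ f u) (hg : HasBochnerIntegral μ g v)
    (h : ∀ᵐ x ∂μ, f x ≤ g x) : u ≤ v :=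
  hf.2 ▸ hg.2 ▸ integral_mono_ae hf.1 hg.1 h

lemma mono (hf : HasBochnerIntegral μ f u) (hg : HasBochnerIntegral μ g v)
    (h : ∀ x, f x ≤ g x) : u ≤ v :=
  hf.mono_ae hg (ae_of_all _ h)

end HasBochnerIntegral

end HasBochnerIntegral

section ExpGrowth

open ProbabilityTheory

/-- `f` grows at most exponentially in the norm. This class of functions is closed under the
algebraic operations used below and is integrable for every Gaussian measure. -/
def HasExpGrowth {W : Type*} [NormedAddCommGroup W] (f : W → ℝ) : Prop :=
  ∃ C L : ℝ, 0 ≤ C ∧ 0 ≤ L ∧ ∀ x, |f x| ≤ C * Real.exp (L * ‖x‖)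

variable {W : Type*} [NormedAddCommGroup W] {f g : W → ℝ}

namespace HasExpGrowth

lemma of_abs_le (hg : HasExpGrowth g) (h : ∀ x, |f x| ≤ g x) : HasExpGrowth f := by
  obtain ⟨C, L, hC, hL, hgb⟩ := hg
  exact ⟨C, L, hC, hL, fun x ↦ (h x).trans ((le_abs_self _).trans (hgb x))⟩

lemma const (c : ℝ) : HasExpGrowth fun _ : W ↦ c :=
  ⟨|c|, 0, abs_nonneg c, le_rfl, fun x ↦ by simp⟩

lemma exp_mul_norm {L : ℝ} (hL : 0 ≤ L) : HasExpGrowth fun x : W ↦ Real.exp (L * ‖x‖) :=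
  ⟨1, L, zero_le_one, hL, fun x ↦ by simp⟩

lemma add (hf : HasExpGrowth f) (hg : HasExpGrowth g) : HasExpGrowth fun x ↦ f x + g x := by
  obtain ⟨C, L, hC, hL, h⟩ := hf
  obtain ⟨C', L', hC', hL', h'⟩ := hg
  refine ⟨C + C', L + L', by positivity, by positivity, fun x ↦ (abs_add_le _ _).trans ?_⟩
  rw [add_mul C C']
  refine add_le_add ((h x).trans ?_) ((h' x).trans ?_) <;> gcongr <;> linarith

lemma mul (hf : HasExpGrowth f) (hg : HasExpGrowth g) : HasExpGrowth fun x ↦ f x * g x := by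
  obtain ⟨C, L, hC, hL, h⟩ := hf
  obtain ⟨C', L', hC', hL', h'⟩ := hg
  refine ⟨C * C', L + L', by positivity, by positivity, fun x ↦ ?_⟩
  rw [abs_mul, add_mul, Real.exp_add, mul_mul_mul_comm]
  exact mul_le_mul (h x) (h' x) (abs_nonneg _) (by positivity)

lemma pow_two (hf : HasExpGrowth f) : HasExpGrowth fun x ↦ f x ^ 2 := by
  simpa only [sq] using hf.mul hf

lemma norm : HasExpGrowth fun x : W ↦ ‖x‖ :=
  (exp_mul_norm zero_le_one).of_abs_le fun x ↦ by
    linarith [Real.add_one_le_exp (1 * ‖x‖), abs_of_nonneg (norm_nonneg x)]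

lemma comp_of_norm_le {W' : Type*} [NormedAddCommGroup W'] (hf : HasExpGrowth f)
    {φ : W' → W} {c : ℝ} (hφ : ∀ x, ‖φ x‖ ≤ c * ‖x‖) : HasExpGrowth fun x ↦ f (φ x) := by
  obtain ⟨C, L, hC, hL, h⟩ := hf
  refine ⟨C, L * |c|, hC, by positivity, fun x ↦ (h _).trans ?_⟩
  rw [mul_assoc]
  gcongr
  exact (hφ x).trans (mul_le_mul_of_nonneg_right (le_abs_self c) (norm_nonneg x))

lemma comp_fst {W' : Type*} [NormedAddCommGroup W'] (hf : HasExpGrowth f) :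
    HasExpGrowth fun p : W × W' ↦ f p.1 :=
  hf.comp_of_norm_le (c := 1) fun p ↦ by simpa only [one_mul] using norm_fst_le p

lemma comp_snd {W' : Type*} [NormedAddCommGroup W'] (hf : HasExpGrowth f) :
    HasExpGrowth fun p : W' × W ↦ f p.2 :=
  hf.comp_of_norm_le (c := 1) fun p ↦ by simpa only [one_mul] using norm_snd_le p

lemma comp_smul_add_smul [NormedSpace ℝ W] (hf : HasExpGrowth f) (a b : ℝ) :
    HasExpGrowth fun p : W × W ↦ f (a • p.1 + b • p.2) :=
  hf.comp_of_norm_le (c := |a| + |b|) fun p ↦ (norm_add_le _ _).trans (by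
    rw [norm_smul, norm_smul, add_mul, Real.norm_eq_abs, Real.norm_eq_abs]
    gcongr
    · exact norm_fst_le p
    · exact norm_snd_le p)

lemma integrable [NormedSpace ℝ W] [CompleteSpace W] [SecondCountableTopology W]
    [MeasurableSpace W] [BorelSpace W] {μ : Measure W} [IsGaussian μ] (hf : HasExpGrowth f)
    (hfm : AEStronglyMeasurable f μ) : Integrable f μ := by
  obtain ⟨C, L, hC, -, h⟩ := hf
  obtain ⟨c, hc, hint⟩ := IsGaussian.exists_integrable_exp_sq μ
  refine (hint.const_mul (C * Real.exp (L ^ 2 / (4 * c)))).mono' hfm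
    (ae_of_all _ fun x ↦ (h x).trans ?_)
  rw [mul_assoc, ← Real.exp_add]
  gcongr
  have hsq : L ^ 2 / (4 * c) + c * ‖x‖ ^ 2 - L * ‖x‖ = (L - 2 * c * ‖x‖) ^ 2 / (4 * c) := by
    field_simp
    ring
  have : 0 ≤ (L - 2 * c * ‖x‖) ^ 2 / (4 * c) := by positivity
  linarith

end HasExpGrowth

lemma abs_le_of_lipschitzWith {G : W → ℝ} {K : ℝ≥0} (hG : LipschitzWith K G) (x : W) :
    |G x| ≤ |G 0| + K * ‖x‖ := by
  have h := hG.dist_le_mul x 0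
  rw [Real.dist_eq, dist_zero_right] at h
  linarith [abs_sub_abs_le_abs_sub (G x) (G 0)]

lemma hasExpGrowth_of_lipschitzWith {G : W → ℝ} {K : ℝ≥0} (hG : LipschitzWith K G) :
    HasExpGrowth G :=
  ((HasExpGrowth.const |G 0|).add ((HasExpGrowth.const (K : ℝ)).mul .norm)).of_abs_le
    (abs_le_of_lipschitzWith hG)

lemma hasExpGrowth_exp_of_lipschitzWith {G : W → ℝ} {K : ℝ≥0} (hG : LipschitzWith K G) :
    HasExpGrowth fun x ↦ Real.exp (G x) := by
  refine ⟨Real.exp |G 0|, K, by positivity, K.2, fun x ↦ ?_⟩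
  rw [Real.abs_exp, ← Real.exp_add]
  exact Real.exp_le_exp.2 ((le_abs_self _).trans (abs_le_of_lipschitzWith hG x))

end ExpGrowth

section StdGaussian

open ProbabilityTheory

variable {V : Type*} [NormedAddCommGroup V] [InnerProductSpace ℝ V] [FiniteDimensional ℝ V]
  [MeasurableSpace V] [BorelSpace V]

lemma map_smul_add_smul_stdGaussian {a b c : ℝ} (habc : a ^ 2 + b ^ 2 = c ^ 2) :
    ((stdGaussian V).prod (stdGaussian V)).map (fun p : V × V ↦ a • p.1 + b • p.2) =
      (stdGaussian V).map (c • ·) := by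
  have hsum : ((stdGaussian V).prod (stdGaussian V)).map (fun p : V × V ↦ a • p.1 + b • p.2) =
      ((stdGaussian V).map (a • ·)).conv ((stdGaussian V).map (b • ·)) := by
    rw [Measure.conv, Measure.map_prod_map _ _ (by fun_prop) (by fun_prop),
      Measure.map_map (by fun_prop) (by fun_prop)]
    rfl
  rw [hsum]
  refine Measure.ext_of_charFun (funext fun t ↦ ?_)
  simp only [charFun_conv, charFun_map_smul, charFun_stdGaussian, norm_smul, ← Complex.exp_add]
  congr 1
  norm_cast
  rw [mul_pow, mul_pow, mul_pow, Real.norm_eq_abs, Real.norm_eq_abs, Real.norm_eq_abs, sq_abs,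
    sq_abs, sq_abs, ← habc]
  ring

lemma integral_smul_add_smul_stdGaussian {a b c : ℝ} (habc : a ^ 2 + b ^ 2 = c ^ 2) {g : V → ℝ}
    (hg : StronglyMeasurable g) :
    ∫ p : V × V, g (a • p.1 + b • p.2) ∂((stdGaussian V).prod (stdGaussian V)) =
      ∫ x, g (c • x) ∂(stdGaussian V) := by
  calc _ = ∫ x, g x ∂((stdGaussian V).prod (stdGaussian V)).map
          (fun p : V × V ↦ a • p.1 + b • p.2) :=
        (integral_map (by fun_prop) hg.aestronglyMeasurable).symm
    _ = ∫ x, g x ∂(stdGaussian V).map (c • ·) := by rw [map_smul_add_smul_stdGaussian habc]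
    _ = _ := integral_map (by fun_prop) hg.aestronglyMeasurable

lemma integral_sq_dual_stdGaussian (L : V →L[ℝ] ℝ) :
    ∫ x, (L x) ^ 2 ∂(stdGaussian V) = ‖L‖ ^ 2 := by
  rw [← variance_of_integral_eq_zero (by fun_prop) (integral_strongDual_stdGaussian L)]
  exact variance_dual_stdGaussian L

lemma integrable_exp_neg_sq_norm :
    Integrable (fun x : V ↦ Real.exp (-(1 / 2) * ‖x‖ ^ 2)) := by
  refine (GaussianFourier.integrable_cexp_neg_mul_sq_norm_add (V := V) (b := (1 / 2 : ℂ))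
    (by norm_num) 0 0).norm.congr (ae_of_all _ fun x ↦ ?_)
  simp only [Complex.norm_exp]
  congr 1
  simp [← Complex.ofReal_pow]

lemma integral_cexp_neg_sq_norm_add_I_inner (t : V) :
    ∫ x : V, Complex.exp (-(1 / 2) * ‖x‖ ^ 2 + Complex.I * ⟪t, x⟫) =
      (((2 * Real.pi) ^ ((Module.finrank ℝ V : ℝ) / 2) : ℝ) : ℂ) *
        Complex.exp (-(‖t‖ ^ 2 / 2)) := by
  have hpi : (Real.pi / (1 / 2 : ℂ)) ^ (Module.finrank ℝ V / 2 : ℂ) =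
      (((2 * Real.pi) ^ ((Module.finrank ℝ V : ℝ) / 2) : ℝ) : ℂ) := by
    rw [Complex.ofReal_cpow (by positivity)]
    push_cast
    congr 1
    ring
  rw [GaussianFourier.integral_cexp_neg_mul_sq_norm_add (by norm_num) Complex.I t, hpi,
    Complex.I_sq]
  congr 2
  ring

lemma stdGaussian_eq_withDensity : stdGaussian V = (volume : Measure V).withDensity fun x ↦
    ENNReal.ofReal ((2 * Real.pi) ^ (-(Module.finrank ℝ V : ℝ) / 2) *
      Real.exp (-(1 / 2) * ‖x‖ ^ 2)) := by
  have := isFiniteMeasure_withDensity_ofReal ((integrable_exp_neg_sq_norm (V := V)).const_mul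
    ((2 * Real.pi) ^ (-(Module.finrank ℝ V : ℝ) / 2))).2
  refine Measure.ext_of_charFun (funext fun t ↦ ?_)
  have hintegrand : ∀ x : V, (ENNReal.ofReal ((2 * Real.pi) ^ (-(Module.finrank ℝ V : ℝ) / 2) *
      Real.exp (-(1 / 2) * ‖x‖ ^ 2))).toReal • Complex.exp (⟪x, t⟫ * Complex.I) =
      (((2 * Real.pi) ^ (-(Module.finrank ℝ V : ℝ) / 2) : ℝ) : ℂ) *
        Complex.exp (-(1 / 2) * ‖x‖ ^ 2 + Complex.I * ⟪t, x⟫) := fun x ↦ by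
    rw [ENNReal.toReal_ofReal (by positivity), Complex.real_smul, Complex.exp_add,
      real_inner_comm, mul_comm Complex.I]
    push_cast
    ring
  rw [charFun_stdGaussian, charFun_apply,
    integral_withDensity_eq_integral_toReal_smul (by fun_prop) (by simp)]
  simp_rw [hintegrand]
  rw [integral_const_mul, integral_cexp_neg_sq_norm_add_I_inner, ← mul_assoc,
    ← Complex.ofReal_mul, ← Real.rpow_add (by positivity), neg_div (2 : ℝ), neg_add_cancel,
    Real.rpow_zero, Complex.ofReal_one, one_mul]
  congr 1
  ring

lemma stdGaussian_absolutelyContinuous : stdGaussian V ≪ (volume : Measure V) := by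
  rw [stdGaussian_eq_withDensity]
  exact withDensity_absolutelyContinuous _ _

end StdGaussian

section Entropy

open ProbabilityTheory

/-- The entropy `∫ e^G G - (∫ e^G) log (∫ e^G)` of the function `exp G` under `μ`. -/
def entExp {Ω : Type*} [MeasurableSpace Ω] (μ : Measure Ω) (G : Ω → ℝ) : ℝ :=
  ∫ x, Real.exp (G x) * G x ∂μ - (∫ x, Real.exp (G x) ∂μ) * Real.log (∫ x, Real.exp (G x) ∂μ)

lemma sub_le_mul_log_sub_log {s t : ℝ} (hs : 0 < s) (ht : 0 < t) :
    t - s ≤ t * (Real.log t - Real.log s) := by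
  have h := mul_le_mul_of_nonneg_left (Real.log_le_sub_one_of_pos (div_pos hs ht)) ht.le
  rw [Real.log_div hs.ne' ht.ne', mul_sub_one, mul_div_cancel₀ _ ht.ne'] at h
  linarith

lemma mul_exp_sub_exp_add_one_le (δ : ℝ) :
    Real.exp δ * δ - Real.exp δ + 1 ≤ 1 / 2 * (δ ^ 2 * Real.exp |δ|) := by
  rcases le_total 0 δ with h | h
  · rw [abs_of_nonneg h]
    have hexp := mul_le_mul_of_nonneg_right (Real.quadratic_le_exp_of_nonneg h)
      (show 0 ≤ 1 - δ + δ ^ 2 / 2 by nlinarith [sq_nonneg (δ - 1)])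
    nlinarith [sq_nonneg (δ ^ 2)]
  · have hanti : AntitoneOn (fun t : ℝ ↦ Real.exp t * (1 - t) + t ^ 2 / 2) (Set.Iic 0) := by
      refine antitoneOn_of_deriv_nonpos (convex_Iic 0) (by fun_prop) (by fun_prop) fun t ht ↦ ?_
      rw [interior_Iic, Set.mem_Iio] at ht
      have hd : HasDerivAt (fun t : ℝ ↦ Real.exp t * (1 - t) + t ^ 2 / 2)
          (Real.exp t * (1 - t) + Real.exp t * (-1) + (2 * t ^ 1 * 1) / 2) t :=
        ((Real.hasDerivAt_exp t).mul ((hasDerivAt_id t).const_sub 1)).add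
          (((hasDerivAt_id t).pow 2).div_const 2)
      rw [hd.deriv]
      nlinarith [Real.exp_le_one_iff.2 ht.le]
    have h0 := hanti h (Set.mem_Iic.2 le_rfl) h
    simp only [Real.exp_zero, sub_zero, mul_one] at h0
    nlinarith [sq_nonneg δ, Real.one_le_exp (abs_nonneg δ)]

variable {Ω Ω' : Type*} [MeasurableSpace Ω] [MeasurableSpace Ω'] {μ : Measure Ω} {ν : Measure Ω'}

lemma integral_exp_mul_le_entExp_add {u g : Ω → ℝ}
    (hu : Integrable (fun x ↦ Real.exp (u x)) μ)
    (huu : Integrable (fun x ↦ Real.exp (u x) * u x) μ)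
    (hg : Integrable (fun x ↦ Real.exp (g x)) μ)
    (hug : Integrable (fun x ↦ Real.exp (u x) * g x) μ) :
    ∫ x, Real.exp (u x) * g x ∂μ ≤
      entExp μ u + (∫ x, Real.exp (u x) ∂μ) * Real.log (∫ x, Real.exp (g x) ∂μ) := by
  rcases eq_zero_or_neZero μ with rfl | _
  · simp [entExp]
  set M := ∫ x, Real.exp (u x) ∂μ with hM
  set N := ∫ x, Real.exp (g x) ∂μ with hN
  have hMpos : 0 < M := integral_exp_pos hu
  have hNpos : 0 < N := integral_exp_pos hg
  have hpt : ∀ x, Real.exp (u x) - M / N * Real.exp (g x) ≤ Real.exp (u x) * u x -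
      Real.exp (u x) * g x - (Real.log M - Real.log N) * Real.exp (u x) := fun x ↦ by
    have h := sub_le_mul_log_sub_log (t := Real.exp (u x)) (s := M / N * Real.exp (g x))
      (by positivity) (by positivity)
    rw [Real.log_mul (by positivity) (by positivity), Real.log_div hMpos.ne' hNpos.ne',
      Real.log_exp, Real.log_exp] at h
    linarith
  have hle := ((HasBochnerIntegral.of_integrable hu).sub
    ((HasBochnerIntegral.of_integrable hg).const_mul (M / N))).mono
    (((HasBochnerIntegral.of_integrable huu).sub (.of_integrable hug)).sub
      ((HasBochnerIntegral.of_integrable hu).const_mul (Real.log M - Real.log N))) hpt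
  rw [← hM, ← hN, div_mul_cancel₀ _ hNpos.ne'] at hle
  rw [entExp, ← hM]
  linarith

lemma entExp_nonneg [IsProbabilityMeasure μ] {G : Ω → ℝ}
    (hG : Integrable (fun x ↦ Real.exp (G x)) μ)
    (hGG : Integrable (fun x ↦ Real.exp (G x) * G x) μ) : 0 ≤ entExp μ G := by
  simpa using integral_exp_mul_le_entExp_add (g := fun _ ↦ 0) hG hGG (by simp) (by simp)

lemma entExp_le_mul_integral_sq_sub [IsProbabilityMeasure μ] {G : Ω → ℝ} (c : ℝ)
    (hG : Integrable (fun x ↦ Real.exp (G x)) μ)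
    (hGG : Integrable (fun x ↦ Real.exp (G x) * G x) μ)
    (hsq : Integrable (fun x ↦ (G x - c) ^ 2 * Real.exp |G x - c|) μ) :
    entExp μ G ≤ 1 / 2 * (Real.exp c * ∫ x, (G x - c) ^ 2 * Real.exp |G x - c| ∂μ) := by
  set M := ∫ x, Real.exp (G x) ∂μ with hM
  have hpt : ∀ x, Real.exp (G x) * G x - (c + 1) * Real.exp (G x) + Real.exp c ≤
      1 / 2 * Real.exp c * ((G x - c) ^ 2 * Real.exp |G x - c|) := fun x ↦ by
    have h := mul_le_mul_of_nonneg_left (mul_exp_sub_exp_add_one_le (G x - c))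
      (Real.exp_pos c).le
    rw [show Real.exp (G x) = Real.exp c * Real.exp (G x - c) by
      rw [← Real.exp_add, add_sub_cancel]]
    linarith
  have hle := (((HasBochnerIntegral.of_integrable hGG).sub
    ((HasBochnerIntegral.of_integrable hG).const_mul (c + 1))).add (.const (Real.exp c))).mono
    ((HasBochnerIntegral.of_integrable hsq).const_mul (1 / 2 * Real.exp c)) hpt
  have hlog := sub_le_mul_log_sub_log (Real.exp_pos c) (integral_exp_pos hG)
  rw [Real.log_exp, ← hM] at hlog
  rw [← hM] at hle
  rw [entExp, ← hM]
  linarith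

lemma entExp_prod_le [SFinite μ] [SFinite ν] {Φ : Ω × Ω' → ℝ} {u : Ω → ℝ} {v : Ω' → ℝ}
    (hu : ∀ x, ∫ y, Real.exp (Φ (x, y)) ∂ν = Real.exp (u x))
    (hv : ∀ y, ∫ x, Real.exp (Φ (x, y)) ∂μ = Real.exp (v y))
    (hΦ : Integrable (fun p ↦ Real.exp (Φ p)) (μ.prod ν))
    (hΦΦ : Integrable (fun p ↦ Real.exp (Φ p) * Φ p) (μ.prod ν))
    (hΦu : Integrable (fun p ↦ Real.exp (Φ p) * u p.1) (μ.prod ν))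
    (hΦv : Integrable (fun p ↦ Real.exp (Φ p) * v p.2) (μ.prod ν)) :
    entExp (μ.prod ν) Φ ≤
      ∫ x, entExp ν (fun y ↦ Φ (x, y)) ∂μ + ∫ y, entExp μ (fun x ↦ Φ (x, y)) ∂ν := by
  set M := ∫ p, Real.exp (Φ p) ∂(μ.prod ν) with hM
  have hue : Integrable (fun x ↦ Real.exp (u x)) μ := by simpa only [hu] using hΦ.integral_prod_left
  have hve : Integrable (fun y ↦ Real.exp (v y)) ν := by
    simpa only [hv] using hΦ.integral_prod_right
  have hueu : Integrable (fun x ↦ Real.exp (u x) * u x) μ := by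
    simpa only [integral_mul_const, hu] using hΦu.integral_prod_left
  have hvev : Integrable (fun y ↦ Real.exp (v y) * v y) ν := by
    simpa only [integral_mul_const, hv] using hΦv.integral_prod_right
  have hMu : ∫ x, Real.exp (u x) ∂μ = M := by simp only [hM, integral_prod _ hΦ, hu]
  have hMv : ∫ y, Real.exp (v y) ∂ν = M := by simp only [hM, integral_prod_symm _ hΦ, hv]
  have hgibbs := integral_exp_mul_le_entExp_add (g := fun p ↦ u p.1 + v p.2) hΦ hΦΦ
    (by simpa only [Real.exp_add] using hue.mul_prod hve)
    (by simpa only [mul_add] using! hΦu.add hΦv)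
  simp only [mul_add, Real.exp_add] at hgibbs
  rw [integral_add hΦu hΦv, integral_prod _ hΦu, integral_prod_symm _ hΦv,
    integral_prod_mul (fun x ↦ Real.exp (u x)) (fun y ↦ Real.exp (v y)), hMu, hMv, ← hM,
    ← sq, Real.log_pow] at hgibbs
  simp only [integral_mul_const, hu, hv] at hgibbs
  have hsu : ∫ x, entExp ν (fun y ↦ Φ (x, y)) ∂μ =
      ∫ p, Real.exp (Φ p) * Φ p ∂(μ.prod ν) - ∫ x, Real.exp (u x) * u x ∂μ := by
    simp only [entExp, hu, Real.log_exp]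
    rw [integral_sub hΦΦ.integral_prod_left hueu, integral_prod _ hΦΦ]
  have hsv : ∫ y, entExp μ (fun x ↦ Φ (x, y)) ∂ν =
      ∫ p, Real.exp (Φ p) * Φ p ∂(μ.prod ν) - ∫ y, Real.exp (v y) * v y ∂ν := by
    simp only [entExp, hv, Real.log_exp]
    rw [integral_sub hΦΦ.integral_prod_right hvev, integral_prod_symm _ hΦΦ]
  rw [entExp, ← hM] at hgibbs ⊢
  push_cast at hgibbs
  linarith

lemma lipschitzWith_log_integral_exp {Y : Type*} [PseudoMetricSpace Y] {Φ : Y → Ω → ℝ} {K : ℝ≥0}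
    (hint : ∀ y, Integrable (fun x ↦ Real.exp (Φ y x)) μ)
    (hlip : ∀ x, LipschitzWith K fun y ↦ Φ y x) :
    LipschitzWith K fun y ↦ Real.log (∫ x, Real.exp (Φ y x) ∂μ) := by
  rcases eq_zero_or_neZero μ with rfl | _
  · simpa using LipschitzWith.const' (0 : ℝ)
  refine LipschitzWith.of_le_add_mul K fun y z ↦ ?_
  have hle : ∫ x, Real.exp (Φ y x) ∂μ ≤ ∫ x, Real.exp (K * dist y z) * Real.exp (Φ z x) ∂μ := by
    refine integral_mono (hint y) ((hint z).const_mul _) fun x ↦ ?_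
    have h := (hlip x).dist_le_mul y z
    rw [Real.dist_eq] at h
    rw [← Real.exp_add]
    gcongr
    linarith [le_abs_self (Φ y x - Φ z x)]
  rw [integral_const_mul] at hle
  refine (Real.log_le_log (integral_exp_pos (hint y)) hle).trans (le_of_eq ?_)
  rw [Real.log_mul (Real.exp_ne_zero _) (integral_exp_pos (hint z)).ne', Real.log_exp, add_comm]

end Entropy

section GaussianLogSobolev

open ProbabilityTheory Topology

variable {V : Type*} [NormedAddCommGroup V] [InnerProductSpace ℝ V]

lemma lipschitzWith_comp_add_smul {G : V → ℝ} {K : ℝ≥0} (hG : LipschitzWith K G) (w : V) (c : ℝ) :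
    LipschitzWith (K * ‖c‖₊) fun x ↦ G (w + c • x) := by
  simpa [Function.comp_def] using hG.comp ((LipschitzWith.const w).add (lipschitzWith_smul c))

/-- The difference quotient at `t = 0` of `t ↦ G (√(1 - t²) y + t x)`, at the point `t = b`. -/
def rotationQuotient (G : V → ℝ) (b : ℝ) (p : V × V) : ℝ :=
  (G (√(1 - b ^ 2) • p.1 + b • p.2) - G p.1) / b

lemma one_sub_sqrt_one_sub_sq_le {b : ℝ} (hb : 0 ≤ b) (hb1 : b ≤ 1) :
    |√(1 - b ^ 2) - 1| ≤ b := by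
  have hle : √(1 - b ^ 2) ≤ 1 := Real.sqrt_le_one.2 (by nlinarith)
  have hge : 1 - b ≤ √(1 - b ^ 2) := Real.le_sqrt_of_sq_le (by nlinarith)
  rw [abs_sub_comm, abs_of_nonneg (by linarith)]
  linarith

lemma abs_rotationQuotient_le {G : V → ℝ} {K : ℝ≥0} (hG : LipschitzWith K G) {b : ℝ}
    (hb : 0 < b) (hb1 : b ≤ 1) (p : V × V) :
    |rotationQuotient G b p| ≤ K * (‖p.1‖ + ‖p.2‖) := by
  have hdist : √(1 - b ^ 2) • p.1 + b • p.2 - p.1 = (√(1 - b ^ 2) - 1) • p.1 + b • p.2 := by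
    rw [sub_smul, one_smul]
    abel
  have hG' := hG.dist_le_mul (√(1 - b ^ 2) • p.1 + b • p.2) p.1
  rw [Real.dist_eq, dist_eq_norm, hdist] at hG'
  rw [rotationQuotient, abs_div, abs_of_pos hb, div_le_iff₀ hb]
  calc _ ≤ K * (‖(√(1 - b ^ 2) - 1) • p.1‖ + ‖b • p.2‖) :=
        hG'.trans (mul_le_mul_of_nonneg_left (norm_add_le _ _) K.2)
    _ ≤ K * (b * ‖p.1‖ + b * ‖p.2‖) := by
        rw [norm_smul, norm_smul, Real.norm_eq_abs, Real.norm_of_nonneg hb.le]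
        gcongr
        exact one_sub_sqrt_one_sub_sq_le hb.le hb1
    _ = _ := by ring

lemma tendsto_rotationQuotient {G : V → ℝ} {p : V × V} (hG : DifferentiableAt ℝ G p.1) :
    Tendsto (fun b ↦ rotationQuotient G b p) (𝓝[>] 0) (𝓝 (fderiv ℝ G p.1 p.2)) := by
  have hsqrt : HasDerivAt (fun t : ℝ ↦ √(1 - t ^ 2)) 0 0 := by
    simpa using (((hasDerivAt_id (0 : ℝ)).pow 2).const_sub 1).sqrt (by simp)
  have hcurve : HasDerivAt (fun t : ℝ ↦ √(1 - t ^ 2) • p.1 + t • p.2) p.2 0 := by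
    simpa using! (hsqrt.smul_const p.1).add ((hasDerivAt_id (0 : ℝ)).smul_const p.2)
  have hG' : HasFDerivAt G (fderiv ℝ G p.1) (√(1 - (0 : ℝ) ^ 2) • p.1 + (0 : ℝ) • p.2) := by
    simpa using hG.hasFDerivAt
  refine (hasDerivAt_iff_tendsto_slope.1 (hG'.comp_hasDerivAt 0 hcurve)).mono_left
    (nhdsWithin_mono 0 fun t ht ↦ (Set.mem_Ioi.1 ht).ne') |>.congr fun b ↦ ?_
  simp [slope_def_field, rotationQuotient]

/-- The integrand `e^{G(y)} q² e^{|b q|}`, with `q` the difference quotient `rotationQuotient G b`,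
which bounds the entropy of the slices of `exp G` and tends to `e^{G(y)} ⟨∇G(y), x⟩²`. -/
def rotationEnergy (G : V → ℝ) (b : ℝ) (p : V × V) : ℝ :=
  Real.exp (G p.1) * (rotationQuotient G b p ^ 2 * Real.exp |b * rotationQuotient G b p|)

lemma continuous_rotationEnergy {G : V → ℝ} (hG : Continuous G) (b : ℝ) :
    Continuous (rotationEnergy G b) := by
  unfold rotationEnergy rotationQuotient
  fun_prop

lemma norm_rotationEnergy_le {G : V → ℝ} {K : ℝ≥0} (hG : LipschitzWith K G) {b : ℝ}
    (hb : 0 < b) (hb1 : b ≤ 1) (p : V × V) :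
    ‖rotationEnergy G b p‖ ≤ Real.exp (G p.1) *
      ((K * (‖p.1‖ + ‖p.2‖)) ^ 2 * (Real.exp (K * ‖p.1‖) * Real.exp (K * ‖p.2‖))) := by
  have hq := abs_rotationQuotient_le hG hb hb1 p
  have hbq : |b * rotationQuotient G b p| ≤ K * (‖p.1‖ + ‖p.2‖) := by
    rw [abs_mul, abs_of_pos hb]
    exact (mul_le_of_le_one_left (abs_nonneg _) hb1).trans hq
  rw [Real.norm_of_nonneg (by unfold rotationEnergy; positivity), rotationEnergy,
    ← Real.exp_add, ← mul_add, ← sq_abs (rotationQuotient G b p)]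
  exact mul_le_mul_of_nonneg_left (mul_le_mul (pow_le_pow_left₀ (abs_nonneg _) hq 2)
    (Real.exp_le_exp.2 hbq) (by positivity) (by positivity)) (by positivity)

variable [FiniteDimensional ℝ V] [MeasurableSpace V] [BorelSpace V]

lemma integrable_exp_of_lipschitzWith {G : V → ℝ} {K : ℝ≥0} (hG : LipschitzWith K G) :
    Integrable (fun x ↦ Real.exp (G x)) (stdGaussian V) :=
  (hasExpGrowth_exp_of_lipschitzWith hG).integrable hG.continuous.rexp.aestronglyMeasurable

lemma integrable_exp_mul_of_lipschitzWith {G : V → ℝ} {K : ℝ≥0} (hG : LipschitzWith K G) :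
    Integrable (fun x ↦ Real.exp (G x) * G x) (stdGaussian V) :=
  ((hasExpGrowth_exp_of_lipschitzWith hG).mul (hasExpGrowth_of_lipschitzWith hG)).integrable
    (hG.continuous.rexp.mul hG.continuous).aestronglyMeasurable

/-- The entropy of `exp G` under the Gaussian measure with mean `w` and covariance `c²`. -/
def entExpGaussian (G : V → ℝ) (c : ℝ) (w : V) : ℝ :=
  entExp (stdGaussian V) fun x ↦ G (w + c • x)

lemma stronglyMeasurable_entExpGaussian {G : V → ℝ} (hG : Continuous G) (c : ℝ) :
    StronglyMeasurable (entExpGaussian G c) := by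
  have hexp : StronglyMeasurable fun w : V ↦
      ∫ x, Real.exp (G (w + c • x)) ∂(stdGaussian V) :=
    StronglyMeasurable.integral_prod_right' (f := fun p : V × V ↦ Real.exp (G (p.1 + c • p.2)))
      (Continuous.stronglyMeasurable (by fun_prop))
  have hexp_mul : StronglyMeasurable fun w : V ↦
      ∫ x, Real.exp (G (w + c • x)) * G (w + c • x) ∂(stdGaussian V) :=
    StronglyMeasurable.integral_prod_right'
      (f := fun p : V × V ↦ Real.exp (G (p.1 + c • p.2)) * G (p.1 + c • p.2))
      (Continuous.stronglyMeasurable (by fun_prop))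
  exact hexp_mul.sub (hexp.mul hexp.measurable.log.stronglyMeasurable)

lemma entExpGaussian_nonneg {G : V → ℝ} {K : ℝ≥0} (hG : LipschitzWith K G) (c : ℝ) (w : V) :
    0 ≤ entExpGaussian G c w :=
  entExp_nonneg (integrable_exp_of_lipschitzWith (lipschitzWith_comp_add_smul hG w c))
    (integrable_exp_mul_of_lipschitzWith (lipschitzWith_comp_add_smul hG w c))

lemma integrable_sq_mul_exp_abs_of_lipschitzWith {G : V → ℝ} {K : ℝ≥0} (hG : LipschitzWith K G)
    (m : ℝ) : Integrable (fun x ↦ (G x - m) ^ 2 * Real.exp |G x - m|) (stdGaussian V) := by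
  have hsub : LipschitzWith K fun x ↦ G x - m := by simpa using hG.sub (LipschitzWith.const m)
  have habs : LipschitzWith K fun x ↦ |G x - m| := by
    simpa using! (lipschitzWith_one_norm (E := ℝ)).comp hsub
  exact ((hasExpGrowth_of_lipschitzWith hsub).pow_two.mul
    (hasExpGrowth_exp_of_lipschitzWith habs)).integrable
    ((hsub.continuous.pow 2).mul habs.continuous.rexp).aestronglyMeasurable

lemma entExpGaussian_le {G : V → ℝ} {K : ℝ≥0} (hG : LipschitzWith K G) (c m : ℝ) (w : V) :
    entExpGaussian G c w ≤ 1 / 2 * (Real.exp m *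
      ∫ x, (G (w + c • x) - m) ^ 2 * Real.exp |G (w + c • x) - m| ∂(stdGaussian V)) :=
  entExp_le_mul_integral_sq_sub m
    (integrable_exp_of_lipschitzWith (lipschitzWith_comp_add_smul hG w c))
    (integrable_exp_mul_of_lipschitzWith (lipschitzWith_comp_add_smul hG w c))
    (integrable_sq_mul_exp_abs_of_lipschitzWith (lipschitzWith_comp_add_smul hG w c) m)

lemma hasExpGrowth_entExpGaussian {G : V → ℝ} {K : ℝ≥0} (hG : LipschitzWith K G) (c : ℝ) :
    HasExpGrowth (entExpGaussian G c) := by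
  set κ : ℝ := K * |c| with hκ
  have hκ0 : 0 ≤ κ := by positivity
  set A := ∫ x : V, (κ * ‖x‖) ^ 2 * Real.exp (κ * ‖x‖) ∂(stdGaussian V)
  have hAint : Integrable (fun x : V ↦ (κ * ‖x‖) ^ 2 * Real.exp (κ * ‖x‖)) (stdGaussian V) :=
    (((HasExpGrowth.const κ).mul .norm).pow_two.mul (.exp_mul_norm hκ0)).integrable
      (by fun_prop)
  refine ((HasExpGrowth.const (1 / 2 * A)).mul
    (hasExpGrowth_exp_of_lipschitzWith hG)).of_abs_le fun w ↦ ?_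
  rw [abs_of_nonneg (entExpGaussian_nonneg hG c w)]
  have hint : ∫ x, (G (w + c • x) - G w) ^ 2 * Real.exp |G (w + c • x) - G w| ∂(stdGaussian V) ≤
      A := by
    refine integral_mono (integrable_sq_mul_exp_abs_of_lipschitzWith
      (lipschitzWith_comp_add_smul hG w c) (G w)) hAint fun x ↦ ?_
    have hδ : |G (w + c • x) - G w| ≤ κ * ‖x‖ := by
      simpa [Real.dist_eq, norm_smul, mul_assoc, hκ] using hG.dist_le_mul (w + c • x) w
    rw [← sq_abs (G (w + c • x) - G w)]
    gcongr
  calc entExpGaussian G c w ≤ 1 / 2 * (Real.exp (G w) * A) :=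
        (entExpGaussian_le hG c (G w) w).trans (by gcongr)
    _ = 1 / 2 * A * Real.exp (G w) := by ring

lemma entExp_stdGaussian_le_two_mul {G : V → ℝ} {K : ℝ≥0} (hG : LipschitzWith K G) {s : ℝ}
    (hs : s ^ 2 + s ^ 2 = 1) :
    entExp (stdGaussian V) G ≤ 2 * ∫ y, entExpGaussian G s (s • y) ∂(stdGaussian V) := by
  set Φ : V × V → ℝ := fun p ↦ G (s • p.1 + s • p.2)
  have hGc := hG.continuous
  have : Continuous Φ := by fun_prop
  have hslice : ∀ y, LipschitzWith (K * ‖s‖₊) fun x ↦ Φ (y, x) :=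
    fun y ↦ lipschitzWith_comp_add_smul hG (s • y) s
  have hsymm : ∀ x y, Φ (x, y) = Φ (y, x) := fun x y ↦ congrArg G (add_comm _ _)
  have hrot : ∀ g : V → ℝ, Continuous g →
      ∫ p : V × V, g (s • p.1 + s • p.2) ∂((stdGaussian V).prod (stdGaussian V)) =
        ∫ x, g x ∂(stdGaussian V) := fun g hg ↦ by
    simpa using integral_smul_add_smul_stdGaussian (c := 1) (by linarith) hg.stronglyMeasurable
  set u : V → ℝ := fun y ↦ Real.log (∫ x, Real.exp (Φ (y, x)) ∂(stdGaussian V))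
  have hu : ∀ y, ∫ x, Real.exp (Φ (y, x)) ∂(stdGaussian V) = Real.exp (u y) := fun y ↦
    (Real.exp_log (integral_exp_pos (integrable_exp_of_lipschitzWith (hslice y)))).symm
  have hu_lip : LipschitzWith (K * ‖s‖₊) u :=
    lipschitzWith_log_integral_exp (fun y ↦ integrable_exp_of_lipschitzWith (hslice y))
      fun x ↦ by simpa only [hsymm _ x] using hslice x
  have hu_growth := hasExpGrowth_of_lipschitzWith hu_lip
  have hu_cont := hu_lip.continuous
  have hΦ : HasExpGrowth Φ := (hasExpGrowth_of_lipschitzWith hG).comp_smul_add_smul s s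
  have heΦ : HasExpGrowth fun p ↦ Real.exp (Φ p) :=
    (hasExpGrowth_exp_of_lipschitzWith hG).comp_smul_add_smul s s
  have hle := entExp_prod_le (μ := stdGaussian V) (ν := stdGaussian V) (v := u) hu
    (fun y ↦ by simpa only [hsymm _ y] using hu y)
    (heΦ.integrable (by fun_prop)) ((heΦ.mul hΦ).integrable (by fun_prop))
    ((heΦ.mul hu_growth.comp_fst).integrable (by fun_prop))
    ((heΦ.mul hu_growth.comp_snd).integrable (by fun_prop))
  simp only [fun y x ↦ hsymm x y] at hle
  rw [← two_mul] at hle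
  rwa [entExp, hrot (fun x ↦ Real.exp (G x) * G x) (by fun_prop),
    hrot (fun x ↦ Real.exp (G x)) (by fun_prop)] at hle

lemma integral_entExpGaussian_le_two_mul {G : V → ℝ} {K : ℝ≥0} (hG : LipschitzWith K G)
    {s a a' c : ℝ} (hs : s ^ 2 + s ^ 2 = 1) (ha : a ^ 2 + (c * s) ^ 2 = a' ^ 2) :
    ∫ y, entExpGaussian G c (a • y) ∂(stdGaussian V) ≤
      2 * ∫ y, entExpGaussian G (c * s) (a' • y) ∂(stdGaussian V) := by
  have hmeas := fun r ↦ stronglyMeasurable_entExpGaussian hG.continuous r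
  have hgrowth := fun r ↦ hasExpGrowth_entExpGaussian hG r
  have hprod : Integrable (fun p : V × V ↦ entExpGaussian G (c * s) (a • p.1 + (c * s) • p.2))
      ((stdGaussian V).prod (stdGaussian V)) :=
    ((hgrowth _).comp_smul_add_smul a (c * s)).integrable
      ((hmeas _).comp_measurable (by fun_prop)).aestronglyMeasurable
  have hstep : ∀ w, entExpGaussian G c w ≤
      2 * ∫ z, entExpGaussian G (c * s) (w + (c * s) • z) ∂(stdGaussian V) := fun w ↦ by
    simpa only [entExpGaussian, smul_add, smul_smul, add_assoc] using
      entExp_stdGaussian_le_two_mul (lipschitzWith_comp_add_smul hG w c) hs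
  rw [← integral_smul_add_smul_stdGaussian ha (hmeas _), integral_prod _ hprod,
    ← integral_const_mul]
  exact integral_mono (((hgrowth c).comp_of_norm_le fun x ↦ (norm_smul a x).le).integrable
    ((hmeas c).comp_measurable (by fun_prop)).aestronglyMeasurable)
    (hprod.integral_prod_left.const_mul 2) fun y ↦ hstep (a • y)

lemma entExp_stdGaussian_le_two_pow_mul {G : V → ℝ} {K : ℝ≥0} (hG : LipschitzWith K G) {s : ℝ}
    (hs : s ^ 2 + s ^ 2 = 1) (m : ℕ) :
    entExp (stdGaussian V) G ≤
      2 ^ m * ∫ y, entExpGaussian G (s ^ m) (√(1 - (s ^ m) ^ 2) • y) ∂(stdGaussian V) := by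
  induction m with
  | zero => simp [entExpGaussian]
  | succ m ih =>
    have hpow : ∀ k : ℕ, (s ^ k) ^ 2 ≤ 1 := fun k ↦ by
      rw [← pow_mul, mul_comm, pow_mul]
      exact pow_le_one₀ (sq_nonneg s) (by linarith [sq_nonneg s])
    have hsum : √(1 - (s ^ m) ^ 2) ^ 2 + (s ^ m * s) ^ 2 = √(1 - (s ^ (m + 1)) ^ 2) ^ 2 := by
      rw [Real.sq_sqrt (by linarith [hpow m]), Real.sq_sqrt (by linarith [hpow (m + 1)]),
        pow_succ, mul_pow]
      linear_combination (s ^ m) ^ 2 * hs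
    calc entExp (stdGaussian V) G ≤ _ := ih
      _ ≤ 2 ^ m * (2 * _) := mul_le_mul_of_nonneg_left
          (integral_entExpGaussian_le_two_mul hG hs hsum) (by positivity)
      _ = _ := by rw [← mul_assoc, ← pow_succ, ← pow_succ]

lemma integrable_exp_mul_sq_mul_exp_norm {G : V → ℝ} {K : ℝ≥0} (hG : LipschitzWith K G) :
    Integrable (fun p : V × V ↦ Real.exp (G p.1) *
      ((K * (‖p.1‖ + ‖p.2‖)) ^ 2 * (Real.exp (K * ‖p.1‖) * Real.exp (K * ‖p.2‖))))
      ((stdGaussian V).prod (stdGaussian V)) := by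
  have hGc := hG.continuous
  have hK := HasExpGrowth.exp_mul_norm (W := V) K.2
  exact ((hasExpGrowth_exp_of_lipschitzWith hG).comp_fst.mul
    (((HasExpGrowth.const (K : ℝ)).mul
      (HasExpGrowth.norm.comp_fst.add HasExpGrowth.norm.comp_snd)).pow_two.mul
        (hK.comp_fst.mul hK.comp_snd))).integrable (Continuous.aestronglyMeasurable (by fun_prop))

lemma integral_entExpGaussian_le_integral_rotationEnergy {G : V → ℝ} {K : ℝ≥0}
    (hG : LipschitzWith K G) {b : ℝ} (hb : 0 < b) (hb1 : b ≤ 1) :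
    ∫ y, entExpGaussian G b (√(1 - b ^ 2) • y) ∂(stdGaussian V) ≤
      b ^ 2 * (1 / 2 * ∫ p, rotationEnergy G b p ∂((stdGaussian V).prod (stdGaussian V))) := by
  have hprod : Integrable (rotationEnergy G b) ((stdGaussian V).prod (stdGaussian V)) :=
    (integrable_exp_mul_sq_mul_exp_norm hG).mono'
      (continuous_rotationEnergy hG.continuous b).aestronglyMeasurable
      (ae_of_all _ (norm_rotationEnergy_le hG hb hb1))
  rw [integral_prod _ hprod, ← integral_const_mul, ← integral_const_mul]
  refine integral_mono (((hasExpGrowth_entExpGaussian hG b).comp_of_norm_le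
    fun x ↦ (norm_smul _ x).le).integrable ((stronglyMeasurable_entExpGaussian hG.continuous
      b).comp_measurable (by fun_prop)).aestronglyMeasurable)
    ((hprod.integral_prod_left.const_mul _).const_mul _) fun y ↦
      (entExpGaussian_le hG b (G y) _).trans_eq ?_
  simp only [← integral_const_mul]
  refine integral_congr_ae (ae_of_all _ fun x ↦ ?_)
  have hbq : b * rotationQuotient G b (y, x) = G (√(1 - b ^ 2) • y + b • x) - G y :=
    mul_div_cancel₀ _ hb.ne'
  simp only [rotationEnergy, ← hbq]
  ring

lemma entExp_stdGaussian_le_integral_rotationEnergy {G : V → ℝ} {K : ℝ≥0}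
    (hG : LipschitzWith K G) {s : ℝ} (hs0 : 0 < s) (hs : s ^ 2 + s ^ 2 = 1) (m : ℕ) :
    entExp (stdGaussian V) G ≤
      1 / 2 * ∫ p, rotationEnergy G (s ^ m) p ∂((stdGaussian V).prod (stdGaussian V)) := by
  have hpow : (2 : ℝ) ^ m * (s ^ m) ^ 2 = 1 := by
    rw [← pow_mul, mul_comm m, pow_mul, ← mul_pow, show 2 * s ^ 2 = 1 by linarith, one_pow]
  calc entExp (stdGaussian V) G ≤ 2 ^ m * _ := entExp_stdGaussian_le_two_pow_mul hG hs m
    _ ≤ 2 ^ m * ((s ^ m) ^ 2 * _) := by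
        gcongr
        exact integral_entExpGaussian_le_integral_rotationEnergy hG (pow_pos hs0 m)
          (pow_le_one₀ hs0.le (by nlinarith))
    _ = _ := by rw [← mul_assoc, hpow, one_mul]

lemma integral_exp_mul_sq_fderiv_apply {G : V → ℝ} {K : ℝ≥0} (hG : LipschitzWith K G) :
    ∫ p, Real.exp (G p.1) * fderiv ℝ G p.1 p.2 ^ 2 ∂((stdGaussian V).prod (stdGaussian V)) =
      ∫ y, Real.exp (G y) * ‖fderiv ℝ G y‖ ^ 2 ∂(stdGaussian V) := by
  have hmeas : Measurable fun p : V × V ↦ fderiv ℝ G p.1 p.2 :=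
    ContinuousLinearMap.measurable_apply₂.comp
      (((measurable_fderiv ℝ G).comp measurable_fst).prodMk measurable_snd)
  have hGm := hG.continuous.measurable
  have hint : Integrable (fun p : V × V ↦ Real.exp (G p.1) * fderiv ℝ G p.1 p.2 ^ 2)
      ((stdGaussian V).prod (stdGaussian V)) := by
    refine ((((hasExpGrowth_exp_of_lipschitzWith hG).comp_fst).mul
      ((HasExpGrowth.const (K : ℝ)).mul HasExpGrowth.norm.comp_snd).pow_two).of_abs_le
        fun p ↦ ?_).integrable (Measurable.aestronglyMeasurable (by fun_prop))
    rw [abs_of_nonneg (by positivity), ← sq_abs (fderiv ℝ G p.1 p.2)]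
    gcongr
    exact ((fderiv ℝ G p.1).le_opNorm p.2).trans
      (mul_le_mul_of_nonneg_right (norm_fderiv_le_of_lipschitz ℝ hG) (norm_nonneg _))
  rw [integral_prod _ hint]
  simp only [integral_const_mul, integral_sq_dual_stdGaussian]

theorem gaussian_logSobolev {G : V → ℝ} {K : ℝ≥0} (hG : LipschitzWith K G) :
    entExp (stdGaussian V) G ≤
      1 / 2 * ∫ y, Real.exp (G y) * ‖fderiv ℝ G y‖ ^ 2 ∂(stdGaussian V) := by
  set s : ℝ := √(1 / 2) with hs_def
  have hs0 : 0 < s := by positivity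
  have hs : s ^ 2 + s ^ 2 = 1 := by rw [hs_def, Real.sq_sqrt (by norm_num)]; norm_num
  have hs1 : s < 1 := by nlinarith
  have hdiff : ∀ᵐ p ∂((stdGaussian V).prod (stdGaussian V)), DifferentiableAt ℝ G p.1 :=
    Measure.quasiMeasurePreserving_fst.ae
      (stdGaussian_absolutelyContinuous.ae_le (hG.ae_differentiableAt (μ := volume)))
  have hb : Tendsto (fun m : ℕ ↦ s ^ m) atTop (𝓝[>] 0) :=
    tendsto_nhdsWithin_iff.2 ⟨tendsto_pow_atTop_nhds_zero_of_lt_one hs0.le hs1,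
      Eventually.of_forall fun m ↦ pow_pos hs0 m⟩
  rw [← integral_exp_mul_sq_fderiv_apply hG]
  have hlim : Tendsto
      (fun m : ℕ ↦ ∫ p, rotationEnergy G (s ^ m) p ∂((stdGaussian V).prod (stdGaussian V))) atTop
      (𝓝 (∫ p, Real.exp (G p.1) * fderiv ℝ G p.1 p.2 ^ 2
        ∂((stdGaussian V).prod (stdGaussian V)))) := by
    refine tendsto_integral_of_dominated_convergence _
      (fun m ↦ (continuous_rotationEnergy hG.continuous _).aestronglyMeasurable)
      (integrable_exp_mul_sq_mul_exp_norm hG) (fun m ↦ ae_of_all _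
        (norm_rotationEnergy_le hG (pow_pos hs0 m) (pow_le_one₀ hs0.le hs1.le)))
      (hdiff.mono fun p hp ↦ ?_)
    have hq := (tendsto_rotationQuotient hp).comp hb
    have hexp := ((tendsto_nhds_of_tendsto_nhdsWithin hb).mul hq).abs.rexp
    simpa [rotationEnergy] using! ((hq.pow 2).mul hexp).const_mul (Real.exp (G p.1))
  exact ge_of_tendsto' (hlim.const_mul (1 / 2))
    (entExp_stdGaussian_le_integral_rotationEnergy hG hs0 hs)

end GaussianLogSobolev

section Herbst

open ProbabilityTheory Topology

lemma le_mul_of_mul_deriv_sub_nonpos {M M' : ℝ → ℝ} {T : ℝ} (h0 : M 0 = 0)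
    (hM : ∀ t, HasDerivAt M (M' t) t) (h : ∀ t ∈ Set.Ioo 0 T, t * M' t - M t ≤ 0) (hT : 0 < T) :
    M T ≤ T * M' 0 := by
  have hd : ∀ t, t ≠ 0 → HasDerivAt (fun t ↦ t⁻¹ * M t) ((t ^ 2)⁻¹ * (t * M' t - M t)) t :=
    fun t ht ↦ ((hasDerivAt_inv ht).mul (hM t)).congr_deriv (by field_simp; ring)
  have hanti : AntitoneOn (fun t ↦ t⁻¹ * M t) (Set.Ioc 0 T) := by
    refine antitoneOn_of_hasDerivWithinAt_nonpos (convex_Ioc 0 T)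
      (fun t ht ↦ (hd t ht.1.ne').continuousAt.continuousWithinAt)
      (f' := fun t ↦ (t ^ 2)⁻¹ * (t * M' t - M t)) ?_ ?_
    all_goals rw [interior_Ioc]; intro t ht
    · exact (hd t ht.1.ne').hasDerivWithinAt
    · exact mul_nonpos_of_nonneg_of_nonpos (by positivity) (h t ht)
  have hlim : Tendsto (fun t ↦ t⁻¹ * M t) (𝓝[>] 0) (𝓝 (M' 0)) := by
    simpa [h0] using (hM 0).tendsto_slope_zero_right
  rw [← inv_mul_le_iff₀ hT]
  refine ge_of_tendsto hlim ?_
  filter_upwards [Ioc_mem_nhdsGT hT] with t ht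
  exact hanti ht ⟨hT, le_rfl⟩ ht.2

variable {Ω : Type*} [MeasurableSpace Ω] {μ : Measure Ω} {X : Ω → ℝ}

lemma hasDerivAt_cgf (hX : integrableExpSet X μ = Set.univ) (t : ℝ) :
    HasDerivAt (cgf X μ) (deriv (cgf X μ) t) t :=
  (analyticAt_cgf (by simp [hX])).differentiableAt.hasDerivAt

variable [IsProbabilityMeasure μ]

lemma integral_mul_exp_eq_mgf_mul_deriv_cgf (hX : integrableExpSet X μ = Set.univ) (t : ℝ) :
    ∫ ω, X ω * Real.exp (t * X ω) ∂μ = mgf X μ t * deriv (cgf X μ) t := by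
  rw [deriv_cgf (by simp [hX]), mul_div_cancel₀]
  exact (mgf_pos (Set.eq_univ_iff_forall.1 hX t)).ne'

lemma entExp_const_mul (hX : integrableExpSet X μ = Set.univ) (t : ℝ) :
    entExp μ (fun ω ↦ t * X ω) = mgf X μ t * (t * deriv (cgf X μ) t - cgf X μ t) := by
  have h : ∫ ω, Real.exp (t * X ω) * (t * X ω) ∂μ = t * ∫ ω, X ω * Real.exp (t * X ω) ∂μ := by
    rw [← integral_const_mul]
    exact integral_congr_ae (ae_of_all _ fun ω ↦ by ring)
  rw [entExp, h, integral_mul_exp_eq_mgf_mul_deriv_cgf hX, cgf, mgf]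
  ring

lemma cgf_le_of_entExp_le_integral_mul_exp (hX : integrableExpSet X μ = Set.univ) {c T : ℝ}
    (hT : 0 < T) (hcT : c * T < 1) (h : ∀ t ∈ Set.Ioo 0 T,
      entExp μ (fun ω ↦ t * X ω) ≤ c * t ^ 2 * ∫ ω, X ω * Real.exp (t * X ω) ∂μ) :
    cgf X μ T ≤ T * μ[X] / (1 - c * T) := by
  have hM : ∀ t, HasDerivAt (fun t ↦ cgf X μ t * (1 - c * t))
      (deriv (cgf X μ) t * (1 - c * t) + cgf X μ t * -c) t := fun t ↦ by
    simpa using! (hasDerivAt_cgf hX t).mul (((hasDerivAt_id t).const_mul c).const_sub 1)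
  have hle := le_mul_of_mul_deriv_sub_nonpos (by simp) hM (fun t ht ↦ ?_) hT
  · rw [le_div_iff₀ (by linarith)]
    simpa [deriv_cgf_zero (X := X) (μ := μ) (by simp [hX])] using hle
  have h' := h t ht
  rw [entExp_const_mul hX, integral_mul_exp_eq_mgf_mul_deriv_cgf hX, mul_left_comm] at h'
  linarith [le_of_mul_le_mul_left h' (mgf_pos (Set.eq_univ_iff_forall.1 hX t))]

lemma cgf_le_of_entExp_le_mgf (hX : integrableExpSet X μ = Set.univ) {B T : ℝ} (hT : 0 < T)
    (h : ∀ t ∈ Set.Ioo 0 T, entExp μ (fun ω ↦ t * X ω) ≤ mgf X μ t * (B * t ^ 2)) :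
    cgf X μ T ≤ T * μ[X] + B * T ^ 2 := by
  have hM : ∀ t, HasDerivAt (fun t ↦ cgf X μ t - B * t ^ 2)
      (deriv (cgf X μ) t - B * (2 * t)) t := fun t ↦ by
    simpa using! (hasDerivAt_cgf hX t).sub ((hasDerivAt_pow 2 t).const_mul B)
  have hle := le_mul_of_mul_deriv_sub_nonpos (by simp) hM (fun t ht ↦ ?_) hT
  · simp only [deriv_cgf_zero (X := X) (μ := μ) (by simp [hX]), probReal_univ] at hle
    linarith
  have h' := h t ht
  rw [entExp_const_mul hX] at h'
  linarith [le_of_mul_le_mul_left h' (mgf_pos (Set.eq_univ_iff_forall.1 hX t))]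

lemma tendsto_entExp_const_mul_div_sq (hX : integrableExpSet X μ = Set.univ) :
    Tendsto (fun t ↦ entExp μ (fun ω ↦ t * X ω) / t ^ 2) (𝓝[>] 0)
      (𝓝 (1 / 2 * (∫ ω, X ω ^ 2 ∂μ - μ[X] ^ 2))) := by
  set Λ := cgf X μ
  have hΛ : ∀ t, AnalyticAt ℝ Λ t := fun t ↦ analyticAt_cgf (by simp [hX])
  have hmgf : Tendsto (mgf X μ) (𝓝[>] 0) (𝓝 1) := by
    have hcont : Continuous (mgf X μ) := by
      simpa [hX, continuousOn_univ] using continuousOn_mgf (X := X) (μ := μ)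
    simpa using (hcont.tendsto 0).mono_left nhdsWithin_le_nhds
  have hvar : deriv (deriv Λ) 0 = ∫ ω, X ω ^ 2 ∂μ - μ[X] ^ 2 := by
    have h := iteratedDeriv_two_cgf (X := X) (μ := μ) (v := 0) (by simp [hX])
    rw [deriv_cgf_zero (by simp [hX])] at h
    simpa [iteratedDeriv_succ] using h
  have hquot : Tendsto (fun t ↦ (t * deriv Λ t - Λ t) / t ^ 2) (𝓝[>] 0)
      (𝓝 (1 / 2 * deriv (deriv Λ) 0)) := by
    have hderiv : ∀ t, HasDerivAt (fun t ↦ t * deriv Λ t - Λ t) (t * deriv (deriv Λ) t) t :=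
      fun t ↦ by simpa using! ((hasDerivAt_id t).mul
        (hΛ t).deriv.differentiableAt.hasDerivAt).sub (hΛ t).differentiableAt.hasDerivAt
    refine HasDerivAt.lhopital_zero_nhdsGT (.of_forall hderiv)
      (.of_forall fun t ↦ by simpa using hasDerivAt_pow 2 t) ?_ ?_ ?_ ?_
    · filter_upwards [self_mem_nhdsWithin] with t ht using
        mul_ne_zero two_ne_zero (Set.mem_Ioi.1 ht).ne'
    · simpa [Λ] using (hderiv 0).continuousAt.tendsto.mono_left nhdsWithin_le_nhds
    · simpa using ((continuous_pow 2).tendsto (0 : ℝ)).mono_left nhdsWithin_le_nhds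
    · refine (((hΛ 0).deriv.deriv.continuousAt.tendsto.mono_left
        nhdsWithin_le_nhds).const_mul (1 / 2)).congr' ?_
      filter_upwards [self_mem_nhdsWithin] with t ht
      field_simp [(Set.mem_Ioi.1 ht).ne']
  rw [← hvar, ← one_mul (1 / 2 * _)]
  exact (hmgf.mul hquot).congr fun t ↦ by rw [entExp_const_mul hX, mul_div_assoc]

end Herbst

section GaussianPoincare

open ProbabilityTheory Topology

variable {V : Type*} [NormedAddCommGroup V] [InnerProductSpace ℝ V] [FiniteDimensional ℝ V]
  [MeasurableSpace V] [BorelSpace V]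

theorem gaussian_poincare {G : V → ℝ} {K : ℝ≥0} (hG : LipschitzWith K G) :
    ∫ y, G y ^ 2 ∂(stdGaussian V) - (∫ y, G y ∂(stdGaussian V)) ^ 2 ≤
      ∫ y, ‖fderiv ℝ G y‖ ^ 2 ∂(stdGaussian V) := by
  have hlip : ∀ t : ℝ, LipschitzWith (‖t‖₊ * K) fun x ↦ t * G x := fun t ↦ by
    simpa [Function.comp_def] using (lipschitzWith_smul t).comp hG
  have hexp : integrableExpSet G (stdGaussian V) = Set.univ :=
    Set.eq_univ_of_forall fun t ↦ integrable_exp_of_lipschitzWith (hlip t)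
  have hGc := hG.continuous
  have : Measurable (fderiv ℝ G) := measurable_fderiv ℝ G
  have hbound : HasExpGrowth fun y ↦ Real.exp |G y| * (K : ℝ) ^ 2 := by
    have habs : LipschitzWith K fun x ↦ |G x| := by
      simpa using! (lipschitzWith_one_norm (E := ℝ)).comp hG
    exact (hasExpGrowth_exp_of_lipschitzWith habs).mul (.const _)
  have hlim : Tendsto
      (fun t : ℝ ↦ ∫ y, Real.exp (t * G y) * ‖fderiv ℝ G y‖ ^ 2 ∂(stdGaussian V)) (𝓝[>] 0)
      (𝓝 (∫ y, ‖fderiv ℝ G y‖ ^ 2 ∂(stdGaussian V))) := by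
    refine tendsto_integral_filter_of_dominated_convergence _
      (.of_forall fun t ↦ Measurable.aestronglyMeasurable (by fun_prop)) ?_
      (hbound.integrable (by fun_prop)) (ae_of_all _ fun y ↦ ?_)
    · filter_upwards [Ioo_mem_nhdsGT (zero_lt_one' ℝ)] with t ht
      refine ae_of_all _ fun y ↦ ?_
      rw [Real.norm_of_nonneg (by positivity)]
      have hty : t * G y ≤ |G y| := (le_abs_self _).trans (by
        rw [abs_mul, abs_of_pos ht.1]
        exact mul_le_of_le_one_left (abs_nonneg _) ht.2.le)
      gcongr
      exact norm_fderiv_le_of_lipschitz ℝ hG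
    · have hc : Continuous fun t : ℝ ↦ Real.exp (t * G y) * ‖fderiv ℝ G y‖ ^ 2 := by fun_prop
      simpa using (hc.tendsto 0).mono_left nhdsWithin_le_nhds
  refine le_of_mul_le_mul_left (le_of_tendsto_of_tendsto (tendsto_entExp_const_mul_div_sq hexp)
    (hlim.const_mul (1 / 2)) ?_) one_half_pos
  filter_upwards [self_mem_nhdsWithin] with t ht
  have hfderiv : ∀ y, fderiv ℝ (fun x ↦ t * G x) y = t • fderiv ℝ G y :=
    fun y ↦ congrFun (fderiv_const_smul_field t) y
  rw [div_le_iff₀ (pow_pos ht 2)]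
  refine (gaussian_logSobolev (hlip t)).trans_eq ?_
  rw [mul_assoc, ← integral_mul_const]
  refine congrArg _ (integral_congr_ae (ae_of_all _ fun y ↦ ?_))
  simp only [hfderiv, norm_smul, mul_pow, Real.norm_eq_abs, sq_abs]
  ring

end GaussianPoincare

section GaussianMoments

open ProbabilityTheory

variable {V : Type*} [NormedAddCommGroup V] [InnerProductSpace ℝ V] [FiniteDimensional ℝ V]
  [MeasurableSpace V] [BorelSpace V] [Nontrivial V]

open Module in
lemma integral_comp_norm_stdGaussian (f : ℝ → ℝ) :
    ∫ x, f ‖x‖ ∂(stdGaussian V) =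
      (finrank ℝ V * volume.real (ball (0 : V) 1) * (2 * Real.pi) ^ (-(finrank ℝ V : ℝ) / 2)) *
        ∫ r in Set.Ioi (0 : ℝ), r ^ (finrank ℝ V - 1) * Real.exp (-(1 / 2) * r ^ 2) * f r := by
  have hdensity : ∫ x, f ‖x‖ ∂(stdGaussian V) = ∫ x : V,
      (2 * Real.pi) ^ (-(finrank ℝ V : ℝ) / 2) * (Real.exp (-(1 / 2) * ‖x‖ ^ 2) * f ‖x‖) := by
    rw [stdGaussian_eq_withDensity,
      integral_withDensity_eq_integral_toReal_smul (by fun_prop) (by simp)]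
    refine integral_congr_ae (ae_of_all _ fun x ↦ ?_)
    simp only [smul_eq_mul]
    rw [ENNReal.toReal_ofReal (by positivity), mul_assoc]
  rw [hdensity, integral_const_mul, integral_fun_norm_addHaar (volume : Measure V)
    fun r ↦ Real.exp (-(1 / 2) * r ^ 2) * f r]
  simp only [nsmul_eq_mul, smul_eq_mul, mul_assoc]
  ring

open Module in
lemma integral_rpow_norm_stdGaussian_eq_mul_Gamma {q : ℝ} (hq : -(finrank ℝ V : ℝ) < q) :
    ∫ x, ‖x‖ ^ q ∂(stdGaussian V) =
      (finrank ℝ V * volume.real (ball (0 : V) 1) * (2 * Real.pi) ^ (-(finrank ℝ V : ℝ) / 2)) *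
        (2 ^ ((finrank ℝ V + q) / 2) * (1 / 2) * Real.Gamma ((finrank ℝ V + q) / 2)) := by
  have hd : ((finrank ℝ V - 1 : ℕ) : ℝ) = finrank ℝ V - 1 := by
    rw [Nat.cast_sub finrank_pos, Nat.cast_one]
  rw [integral_comp_norm_stdGaussian (· ^ q)]
  congr 1
  have hpow : (1 / 2 : ℝ) ^ (-((finrank ℝ V : ℝ) - 1 + q + 1) / 2) =
      2 ^ ((finrank ℝ V + q) / 2) := by
    rw [one_div, Real.inv_rpow zero_le_two, ← Real.rpow_neg zero_le_two]
    congr 1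
    ring
  have h := integral_rpow_mul_exp_neg_mul_rpow (p := 2) (q := (finrank ℝ V : ℝ) - 1 + q)
    two_pos (by linarith) (one_half_pos (α := ℝ))
  rw [hpow, show (finrank ℝ V : ℝ) - 1 + q + 1 = finrank ℝ V + q by ring] at h
  rw [← h]
  refine setIntegral_congr_fun measurableSet_Ioi fun r hr ↦ ?_
  simp only [Real.rpow_add (Set.mem_Ioi.1 hr), ← hd, Real.rpow_natCast, Real.rpow_two]
  ring

open Module in
lemma hasBochnerIntegral_rpow_norm_stdGaussian {q : ℝ} (hq : -(finrank ℝ V : ℝ) < q) :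
    HasBochnerIntegral (stdGaussian V) (fun x ↦ ‖x‖ ^ q)
      (2 ^ (q / 2) * Real.Gamma ((finrank ℝ V + q) / 2) / Real.Gamma (finrank ℝ V / 2)) := by
  have hd : (0 : ℝ) < finrank ℝ V := by exact_mod_cast finrank_pos
  have hΓ : 0 < Real.Gamma (finrank ℝ V / 2) := Real.Gamma_pos_of_pos (by positivity)
  have hΓq : 0 < Real.Gamma ((finrank ℝ V + q) / 2) := Real.Gamma_pos_of_pos (by linarith)
  have htotal := integral_rpow_norm_stdGaussian_eq_mul_Gamma (V := V) (q := 0) (by linarith)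
  simp only [Real.rpow_zero, integral_const, probReal_univ, smul_eq_mul, mul_one, add_zero]
    at htotal
  have hval : ∫ x, ‖x‖ ^ q ∂(stdGaussian V) =
      2 ^ (q / 2) * Real.Gamma ((finrank ℝ V + q) / 2) / Real.Gamma (finrank ℝ V / 2) := by
    rw [integral_rpow_norm_stdGaussian_eq_mul_Gamma hq, eq_div_iff hΓ.ne', add_div,
      Real.rpow_add two_pos, ← add_div]
    linear_combination -(2 ^ (q / 2) * Real.Gamma ((finrank ℝ V + q) / 2)) * htotal
  refine ⟨not_imp_comm.1 integral_undef ?_, hval⟩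
  rw [hval]
  positivity

open Module in
lemma hasBochnerIntegral_sq_norm_stdGaussian :
    HasBochnerIntegral (stdGaussian V) (fun x ↦ ‖x‖ ^ 2) (finrank ℝ V) := by
  have hd : (0 : ℝ) < finrank ℝ V := by exact_mod_cast finrank_pos
  have : 0 < Real.Gamma (finrank ℝ V / 2) := Real.Gamma_pos_of_pos (by positivity)
  have h := hasBochnerIntegral_rpow_norm_stdGaussian (V := V) (q := 2) (by linarith)
  rw [add_div, div_self two_ne_zero, Real.Gamma_add_one (by positivity), Real.rpow_one] at h
  simp only [Real.rpow_two] at h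
  convert! h using 1
  field_simp

open Module in
lemma hasBochnerIntegral_inv_sq_norm_stdGaussian (hd : 2 < finrank ℝ V) :
    HasBochnerIntegral (stdGaussian V) (fun x ↦ (‖x‖ ^ 2)⁻¹) (1 / ((finrank ℝ V : ℝ) - 2)) := by
  have hd' : (2 : ℝ) < finrank ℝ V := by exact_mod_cast hd
  have hΓ : 0 < Real.Gamma (((finrank ℝ V : ℝ) - 2) / 2) := Real.Gamma_pos_of_pos (by linarith)
  have h := hasBochnerIntegral_rpow_norm_stdGaussian (V := V) (q := -2) (by linarith)
  rw [← sub_eq_add_neg, show (finrank ℝ V : ℝ) / 2 = (finrank ℝ V - 2) / 2 + 1 by ring,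
    Real.Gamma_add_one (by linarith), neg_div, div_self two_ne_zero] at h
  simp only [Real.rpow_neg (norm_nonneg _), Real.rpow_neg_one, Real.rpow_two] at h
  convert! h using 1
  have : (finrank ℝ V : ℝ) - 2 ≠ 0 := by linarith
  field_simp

lemma ae_stdGaussian_ne_zero : ∀ᵐ x ∂stdGaussian V, x ≠ 0 :=
  stdGaussian_absolutelyContinuous.ae_le (Measure.ae_ne volume 0)

end GaussianMoments

section Polar

open ProbabilityTheory

lemma map_toSphere_apply_univ (n : ℕ) : ((volume : Measure (E n)).toSphere.map Subtype.val)
    Set.univ = (volume : Measure (E n)).toSphere Set.univ := by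
  rw [Measure.map_apply measurable_subtype_coe MeasurableSet.univ, Set.preimage_univ]

lemma toSphere_apply_univ_ne_zero [NeZero n] :
    (volume : Measure (E n)).toSphere Set.univ ≠ 0 := by
  rw [Ne, Measure.measure_univ_eq_zero]
  exact Measure.toSphere_ne_zero _

instance isProbabilityMeasure_sphMeasure [NeZero n] : IsProbabilityMeasure (sphMeasure n) := by
  refine ⟨?_⟩
  rw [sphMeasure, Measure.smul_apply, smul_eq_mul, map_toSphere_apply_univ]
  exact ENNReal.inv_mul_cancel toSphere_apply_univ_ne_zero (measure_ne_top _ _)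

lemma ae_sphMeasure_norm_eq_one : ∀ᵐ θ ∂sphMeasure n, ‖θ‖ = 1 := by
  refine Measure.ae_smul_measure ((ae_map_iff measurable_subtype_coe.aemeasurable
    (measurableSet_eq_fun (by fun_prop) (by fun_prop))).2 (ae_of_all _ fun θ ↦ ?_)) _
  exact norm_eq_of_mem_sphere θ

lemma integrable_sphMeasure [NeZero n] {F : Type*} [NormedAddCommGroup F] {w : E n → F}
    (hw : Continuous w) : Integrable w (sphMeasure n) := by
  obtain ⟨M, hM⟩ := (isCompact_sphere (0 : E n) 1).exists_bound_of_continuousOn hw.continuousOn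
  refine Integrable.of_bound (C := M) hw.aestronglyMeasurable ?_
  filter_upwards [ae_sphMeasure_norm_eq_one] with θ hθ
  exact hM θ (mem_sphere_zero_iff_norm.2 hθ)

lemma hasBochnerIntegral_sphMeasure [NeZero n] {w : E n → ℝ} (hw : Continuous w) :
    HasBochnerIntegral (sphMeasure n) w (∫ θ, w θ ∂sphMeasure n) :=
  .of_integrable (integrable_sphMeasure hw)

lemma map_polar_withDensity_norm [NeZero n] {g : ℝ → ℝ≥0∞} (hg : Measurable g) :
    ((volume : Measure (E n)).withDensity fun x ↦ g ‖x‖).map (fun x ↦ (‖x‖, ‖x‖⁻¹ • x)) =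
      (((Measure.volumeIoiPow (Module.finrank ℝ (E n) - 1)).withDensity fun r ↦ g r).map
        Subtype.val).prod ((volume : Measure (E n)).toSphere.map Subtype.val) := by
  refine Measure.ext_of_lintegral _ fun F hF ↦ ?_
  have hpolar : Measurable fun x : E n ↦ (‖x‖, ‖x‖⁻¹ • x) := by fun_prop
  have hradial : Measurable fun r : Set.Ioi (0 : ℝ) ↦ g r := hg.comp measurable_subtype_coe
  have hFpolar : Measurable fun z : sphere (0 : E n) 1 × Set.Ioi (0 : ℝ) ↦
      F ((z.2 : ℝ), (z.1 : E n)) := by fun_prop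
  have hgnorm : Measurable fun x : E n ↦ g ‖x‖ := hg.comp measurable_norm
  have hFnorm : Measurable fun x : E n ↦ F (‖x‖, ‖x‖⁻¹ • x) := hF.comp hpolar
  rw [lintegral_map hF hpolar,
    lintegral_withDensity_eq_lintegral_mul _ hgnorm hFnorm,
    ← restrict_compl_singleton (μ := (volume : Measure (E n))) 0,
    ← lintegral_subtype_comap (measurableSet_singleton _).compl, restrict_compl_singleton,
    Measure.map_prod_map _ _ measurable_subtype_coe measurable_subtype_coe,
    lintegral_map hF (by fun_prop), ← lintegral_prod_swap, prod_withDensity_right hradial]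
  refine Eq.trans ?_ (lintegral_withDensity_eq_lintegral_mul _
    (hradial.comp measurable_snd) hFpolar).symm
  rw [← (volume : Measure (E n)).measurePreserving_homeomorphUnitSphereProd.lintegral_comp_emb
    (Homeomorph.measurableEmbedding _)]
  exact lintegral_congr fun x ↦ by simp

theorem map_polar_stdGaussian [NeZero n] :
    (stdGaussian (E n)).map (fun x ↦ (‖x‖, ‖x‖⁻¹ • x)) =
      ((stdGaussian (E n)).map norm).prod (sphMeasure n) := by
  obtain ⟨N, _, hN⟩ : ∃ N : Measure ℝ, SFinite N ∧
      (stdGaussian (E n)).map (fun x ↦ (‖x‖, ‖x‖⁻¹ • x)) = N.prod (sphMeasure n) := by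
    let g : ℝ → ℝ≥0∞ := fun r ↦ ENNReal.ofReal
      ((2 * Real.pi) ^ (-(Module.finrank ℝ (E n) : ℝ) / 2) * Real.exp (-(1 / 2) * r ^ 2))
    have hdensity : stdGaussian (E n) = volume.withDensity fun x ↦ g ‖x‖ :=
      stdGaussian_eq_withDensity
    rw [hdensity, map_polar_withDensity_norm (by fun_prop)]
    refine ⟨((volume : Measure (E n)).toSphere.map Subtype.val) Set.univ •
      ((Measure.volumeIoiPow (Module.finrank ℝ (E n) - 1)).withDensity fun r ↦ g r).map
        Subtype.val, inferInstance, ?_⟩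
    rw [sphMeasure, Measure.prod_smul_left, Measure.prod_smul_right, smul_smul,
      map_toSphere_apply_univ,
      ENNReal.mul_inv_cancel toSphere_apply_univ_ne_zero (measure_ne_top _ _), one_smul]
  have hfst := congrArg (Measure.map Prod.fst) hN
  rw [Measure.map_map measurable_fst (by fun_prop), Measure.map_fst_prod, measure_univ,
    one_smul] at hfst
  rw [hN, ← hfst]
  rfl

lemma HasBochnerIntegral.polar [NeZero n] {A : ℝ → ℝ} {B : E n → ℝ} {a b : ℝ}
    (hA : Measurable A) (hAi : HasBochnerIntegral (stdGaussian (E n)) (fun x ↦ A ‖x‖) a)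
    (hB : HasBochnerIntegral (sphMeasure n) B b) :
    HasBochnerIntegral (stdGaussian (E n)) (fun x ↦ A ‖x‖ * B (‖x‖⁻¹ • x)) (a * b) := by
  have hpolar : AEMeasurable (fun x : E n ↦ (‖x‖, ‖x‖⁻¹ • x)) (stdGaussian (E n)) := by fun_prop
  have := Measure.isProbabilityMeasure_map (μ := stdGaussian (E n)) (f := norm) (by fun_prop)
  have hprod := ((integrable_map_measure hA.aestronglyMeasurable
    measurable_norm.aemeasurable).2 hAi.1).mul_prod hB.1
  have hval := integral_prod_mul (μ := (stdGaussian (E n)).map norm) (ν := sphMeasure n) A B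
  rw [← map_polar_stdGaussian] at hprod hval
  refine ⟨(integrable_map_measure hprod.1 hpolar).1 hprod, ?_⟩
  rw [integral_map hpolar hprod.1, hB.2, integral_map measurable_norm.aemeasurable
    hA.aestronglyMeasurable, hAi.2] at hval
  exact hval

lemma HasBochnerIntegral.angular [NeZero n] {B : E n → ℝ} {b : ℝ}
    (hB : HasBochnerIntegral (sphMeasure n) B b) :
    HasBochnerIntegral (stdGaussian (E n)) (fun x ↦ B (‖x‖⁻¹ • x)) b := by
  simpa using HasBochnerIntegral.polar measurable_const (A := fun _ ↦ 1) (.const 1) hB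

lemma integral_stdGaussian_of_homogeneous [NeZero n] {B : E n → ℝ} (hB : Continuous B) {k : ℕ}
    (hhom : ∀ (r : ℝ) x, B (r • x) = r ^ k * B x) :
    ∫ x, B x ∂stdGaussian (E n) =
      (∫ x : E n, ‖x‖ ^ k ∂stdGaussian (E n)) * ∫ θ, B θ ∂sphMeasure n := by
  have hk : Integrable (fun x : E n ↦ ‖x‖ ^ k) (stdGaussian (E n)) := by
    simpa using (IsGaussian.memLp_id (stdGaussian (E n)) k (by simp)).integrable_norm_pow'
  rw [← (HasBochnerIntegral.polar (A := (· ^ k)) (by fun_prop) (.of_integrable hk)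
    (hasBochnerIntegral_sphMeasure hB)).2]
  refine integral_congr_ae ?_
  filter_upwards [ae_stdGaussian_ne_zero] with x hx
  rw [← hhom, smul_smul, mul_inv_cancel₀ (norm_ne_zero_iff.2 hx), one_smul]

lemma integral_inner_sphMeasure [NeZero n] (v : E n) : ∫ θ, ⟪v, θ⟫ ∂sphMeasure n = 0 := by
  have h := integral_stdGaussian_of_homogeneous (n := n) (B := fun x ↦ ⟪v, x⟫) (k := 1)
    (by fun_prop) fun r x ↦ by rw [real_inner_smul_right, pow_one]
  have hnorm : 0 < ∫ x : E n, ‖x‖ ^ 1 ∂stdGaussian (E n) := by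
    have hdim : (0 : ℝ) < Module.finrank ℝ (E n) := by exact_mod_cast Module.finrank_pos
    have hmoment := hasBochnerIntegral_rpow_norm_stdGaussian (V := E n) (q := 1)
      (by linarith)
    simp only [Real.rpow_one] at hmoment
    have := Real.Gamma_pos_of_pos (s := Module.finrank ℝ (E n) / 2) (by positivity)
    have := Real.Gamma_pos_of_pos (s := (Module.finrank ℝ (E n) + 1) / 2) (by positivity)
    simp only [pow_one, hmoment.2]
    positivity
  have hzero : ∫ x, ⟪v, x⟫ ∂stdGaussian (E n) = 0 := integral_strongDual_stdGaussian (innerSL ℝ v)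
  rw [hzero] at h
  exact (mul_eq_zero.1 h.symm).resolve_left hnorm.ne'

lemma integral_inner_sq_sphMeasure [NeZero n] (v : E n) :
    ∫ θ, ⟪v, θ⟫ ^ 2 ∂sphMeasure n = ‖v‖ ^ 2 / n := by
  have h := integral_stdGaussian_of_homogeneous (n := n) (B := fun x ↦ ⟪v, x⟫ ^ 2) (k := 2)
    (by fun_prop) fun r x ↦ by rw [real_inner_smul_right, mul_pow]
  have hsq : ∫ x, ⟪v, x⟫ ^ 2 ∂stdGaussian (E n) = ‖v‖ ^ 2 := by
    simpa using integral_sq_dual_stdGaussian (innerSL ℝ v)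
  rw [hsq, hasBochnerIntegral_sq_norm_stdGaussian.2, finrank_euclideanSpace_fin] at h
  rw [h, mul_div_cancel_left₀ _ (NeZero.ne _)]

end Polar

section RadialExtension

open NormedSpace (norm_normalize norm_smul_normalize)

lemma norm_inv_norm_smul_le_one {F : Type*} [NormedAddCommGroup F] [NormedSpace ℝ F] (x : F) :
    ‖‖x‖⁻¹ • x‖ ≤ 1 := by
  rw [norm_smul, norm_inv, norm_norm]
  exact inv_mul_le_one

lemma norm_mul_norm_normalize_sub_le {F : Type*} [NormedAddCommGroup F] [NormedSpace ℝ F]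
    (x y : F) : ‖x‖ * ‖‖x‖⁻¹ • x - ‖y‖⁻¹ • y‖ ≤ 2 * ‖x - y‖ := by
  have hsplit : ‖x‖ • (‖x‖⁻¹ • x - ‖y‖⁻¹ • y) = (x - y) + (‖y‖ - ‖x‖) • ‖y‖⁻¹ • y := by
    rw [smul_sub, sub_smul, show ‖x‖ • ‖x‖⁻¹ • x = x from norm_smul_normalize x,
      show ‖y‖ • ‖y‖⁻¹ • y = y from norm_smul_normalize y]
    abel
  have hradial : ‖(‖y‖ - ‖x‖) • ‖y‖⁻¹ • y‖ ≤ ‖x - y‖ := by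
    rw [norm_smul, Real.norm_eq_abs, norm_sub_rev x y]
    exact (mul_le_of_le_one_right (abs_nonneg _) (norm_inv_norm_smul_le_one y)).trans
      (abs_norm_sub_norm_le y x)
  calc ‖x‖ * ‖‖x‖⁻¹ • x - ‖y‖⁻¹ • y‖ = ‖‖x‖ • (‖x‖⁻¹ • x - ‖y‖⁻¹ • y)‖ := by
        rw [norm_smul, norm_norm]
    _ ≤ ‖x - y‖ + ‖(‖y‖ - ‖x‖) • ‖y‖⁻¹ • y‖ := hsplit ▸ norm_add_le _ _
    _ ≤ 2 * ‖x - y‖ := by linarith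

/-- The function `ρ(|x|) w(x/|x|)`. At the origin the direction `x/|x|` is read as `0`. -/
def radialExt (ρ : ℝ → ℝ) (w : E n → ℝ) (x : E n) : ℝ := ρ ‖x‖ * w (‖x‖⁻¹ • x)

lemma lipschitzWith_radialExt {w : E n → ℝ} (hw : ContDiff ℝ 1 w) {ρ : ℝ → ℝ} {C : ℝ≥0}
    (hρ : LipschitzOnWith C ρ (Set.Ici 0)) (hρ0 : ρ 0 = 0) :
    ∃ K, LipschitzWith K (radialExt ρ w) := by
  obtain ⟨K, hK⟩ := hw.contDiffOn.exists_lipschitzOnWith one_ne_zero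
    (convex_closedBall (0 : E n) 1) (isCompact_closedBall 0 1)
  obtain ⟨M, hM⟩ := (isCompact_closedBall (0 : E n) 1).exists_bound_of_continuousOn
    hw.continuous.continuousOn
  have hunit (x : E n) : ‖x‖⁻¹ • x ∈ closedBall (0 : E n) 1 :=
    mem_closedBall_zero_iff.2 (norm_inv_norm_smul_le_one x)
  have hM0 : 0 ≤ M := (norm_nonneg _).trans (hM _ (hunit 0))
  have hρ_sub (x y : E n) : |ρ ‖x‖ - ρ ‖y‖| ≤ C * ‖x - y‖ :=
    (hρ.dist_le_mul _ (norm_nonneg x) _ (norm_nonneg y)).trans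
      (by gcongr; exact abs_norm_sub_norm_le x y)
  have hw_sub (x y : E n) : |w (‖x‖⁻¹ • x) - w (‖y‖⁻¹ • y)| ≤
      K * ‖‖x‖⁻¹ • x - ‖y‖⁻¹ • y‖ := by
    simpa only [dist_eq_norm] using! hK.dist_le_mul _ (hunit x) _ (hunit y)
  refine ⟨2 * C * K + C * M.toNNReal, LipschitzWith.of_dist_le_mul fun x y ↦ ?_⟩
  have hρx : |ρ ‖x‖| ≤ C * ‖x‖ := by simpa [hρ0] using hρ_sub x 0
  have hangular : |ρ ‖x‖| * |w (‖x‖⁻¹ • x) - w (‖y‖⁻¹ • y)| ≤ 2 * C * K * ‖x - y‖ := by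
    calc _ ≤ (C * ‖x‖) * (K * ‖‖x‖⁻¹ • x - ‖y‖⁻¹ • y‖) := by gcongr; exact hw_sub x y
      _ = C * K * (‖x‖ * ‖‖x‖⁻¹ • x - ‖y‖⁻¹ • y‖) := by ring
      _ ≤ C * K * (2 * ‖x - y‖) := 
        mul_le_mul_of_nonneg_left (norm_mul_norm_normalize_sub_le x y) (by positivity)
      _ = _ := by ring
  have hradial : |ρ ‖x‖ - ρ ‖y‖| * |w (‖y‖⁻¹ • y)| ≤ C * M * ‖x - y‖ := by
    calc _ ≤ (C * ‖x - y‖) * M := by gcongr; exacts [hρ_sub x y, hM _ (hunit y)]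
      _ = _ := by ring
  calc dist (radialExt ρ w x) (radialExt ρ w y)
      = |ρ ‖x‖ * (w (‖x‖⁻¹ • x) - w (‖y‖⁻¹ • y)) + (ρ ‖x‖ - ρ ‖y‖) * w (‖y‖⁻¹ • y)| := by
        rw [Real.dist_eq, radialExt, radialExt]
        ring_nf
    _ ≤ 2 * C * K * ‖x - y‖ + C * M * ‖x - y‖ := by
        refine (abs_add_le _ _).trans ?_
        rw [abs_mul, abs_mul]
        exact add_le_add hangular hradial
    _ = _ := by
        push_cast
        rw [Real.coe_toNNReal _ hM0, dist_eq_norm, add_mul]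

lemma projPerp_apply (θ v : E n) : projPerp θ v = v - ⟪v, θ⟫ • θ := by
  simp [projPerp, real_inner_comm]

lemma inner_projPerp_self {θ : E n} (hθ : ‖θ‖ = 1) (v : E n) : ⟪projPerp θ v, θ⟫ = 0 := by
  rw [projPerp_apply, inner_sub_left, real_inner_smul_left, real_inner_self_eq_norm_sq, hθ]
  ring

lemma norm_projPerp_sq {θ : E n} (hθ : ‖θ‖ = 1) (v : E n) :
    ‖projPerp θ v‖ ^ 2 = ‖v‖ ^ 2 - ⟪v, θ⟫ ^ 2 := by
  rw [projPerp_apply, norm_sub_sq_real, real_inner_smul_right, norm_smul, hθ, mul_one,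
    Real.norm_eq_abs, sq_abs]
  ring

lemma sgrad_eq_projPerp (w : E n → ℝ) (θ : E n) : sgrad w θ = projPerp θ (gradient w θ) :=
  (projPerp_apply _ _).symm

lemma norm_sgrad_sq_le (w : E n → ℝ) {θ : E n} (hθ : ‖θ‖ = 1) :
    ‖sgrad w θ‖ ^ 2 ≤ ‖gradient w θ‖ ^ 2 := by
  rw [sgrad_eq_projPerp, norm_projPerp_sq hθ]
  linarith [sq_nonneg ⟪gradient w θ, θ⟫]

lemma hasFDerivAt_norm {F : Type*} [NormedAddCommGroup F] [InnerProductSpace ℝ F] {x : F}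
    (hx : x ≠ 0) : HasFDerivAt (fun y : F ↦ ‖y‖) (innerSL ℝ (‖x‖⁻¹ • x)) x := by
  have hx' : ‖x‖ ≠ 0 := norm_ne_zero_iff.2 hx
  have h := (hasStrictFDerivAt_norm_sq x).hasFDerivAt.sqrt (pow_ne_zero 2 hx')
  simp only [Real.sqrt_sq (norm_nonneg _)] at h
  refine h.congr_fderiv ?_
  ext y
  simp
  field_simp

lemma hasFDerivAt_normalize {x : E n} (hx : x ≠ 0) :
    HasFDerivAt (fun y : E n ↦ ‖y‖⁻¹ • y) (‖x‖⁻¹ • projPerp (‖x‖⁻¹ • x)) x := by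
  have hx' : ‖x‖ ≠ 0 := norm_ne_zero_iff.2 hx
  have hinv := (hasDerivAt_inv hx').comp_hasFDerivAt x (hasFDerivAt_norm hx)
  refine (hinv.smul (hasFDerivAt_id x)).congr_fderiv ?_
  ext1 h
  simp only [add_apply, smul_apply, ContinuousLinearMap.smulRight_apply, projPerp_apply,
    ContinuousLinearMap.id_apply, id_eq, innerSL_apply_apply, smul_eq_mul, Function.comp,
    real_inner_smul_right, real_inner_comm]
  rw [smul_sub, sub_eq_add_neg, ← smul_assoc, ← smul_assoc, ← neg_smul]
  congr 2
  simp only [smul_eq_mul]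
  field_simp

lemma fderiv_radialExt {w : E n → ℝ} (hw : Differentiable ℝ w) {ρ : ℝ → ℝ} {ρ' : ℝ}
    {x : E n} (hx : x ≠ 0) (hρ : HasDerivAt ρ ρ' ‖x‖) :
    fderiv ℝ (radialExt ρ w) x =
      innerSL ℝ ((ρ' * w (‖x‖⁻¹ • x)) • ‖x‖⁻¹ • x + (ρ ‖x‖ / ‖x‖) • sgrad w (‖x‖⁻¹ • x)) := by
  have hangular := HasFDerivAt.comp (f := fun y : E n ↦ ‖y‖⁻¹ • y) x (hw _).hasFDerivAt
    (hasFDerivAt_normalize hx)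
  refine ((hρ.comp_hasFDerivAt x (hasFDerivAt_norm hx)).mul hangular).fderiv.trans ?_
  ext h
  have hgrad (y : E n) : fderiv ℝ w (‖x‖⁻¹ • x) y = ⟪gradient w (‖x‖⁻¹ • x), y⟫ := by
    rw [← toDual_gradient, InnerProductSpace.toDual_apply_apply]
  simp only [add_apply, smul_apply, ContinuousLinearMap.comp_apply, innerSL_apply_apply,
    smul_eq_mul, Function.comp, hgrad, inner_add_left, real_inner_smul_left,
    sgrad, projPerp_apply, inner_sub_right, real_inner_smul_right,
    real_inner_comm]
  ring

lemma norm_fderiv_radialExt_sq {w : E n → ℝ} (hw : Differentiable ℝ w) {ρ : ℝ → ℝ} {ρ' : ℝ}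
    {x : E n} (hx : x ≠ 0) (hρ : HasDerivAt ρ ρ' ‖x‖) :
    ‖fderiv ℝ (radialExt ρ w) x‖ ^ 2 =
      ρ' ^ 2 * w (‖x‖⁻¹ • x) ^ 2 + (ρ ‖x‖ / ‖x‖) ^ 2 * ‖sgrad w (‖x‖⁻¹ • x)‖ ^ 2 := by
  have hθ : ‖‖x‖⁻¹ • x‖ = 1 := norm_normalize hx
  rw [fderiv_radialExt hw hx hρ, innerSL_apply_norm, norm_add_sq_real, real_inner_smul_left,
    real_inner_smul_right, real_inner_comm, sgrad_eq_projPerp, inner_projPerp_self hθ,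
    norm_smul _ (‖x‖⁻¹ • x), norm_smul _ (projPerp _ _), hθ]
  simp only [mul_pow, Real.norm_eq_abs, sq_abs]
  ring

end RadialExtension

section SphereInequalities

open ProbabilityTheory

lemma continuous_gradient {w : E n → ℝ} (hw : ContDiff ℝ 1 w) : Continuous (gradient w) :=
  (InnerProductSpace.toDual ℝ (E n)).symm.continuous.comp (hw.continuous_fderiv one_ne_zero)

lemma continuous_sgrad {w : E n → ℝ} (hw : ContDiff ℝ 1 w) : Continuous (sgrad w) := by
  have := continuous_gradient hw
  unfold sgrad
  fun_prop

lemma sphere_poincare_of_integral_eq_zero [NeZero n] {w : E n → ℝ} (hw : ContDiff ℝ 1 w)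
    (hmean : ∫ θ, w θ ∂sphMeasure n = 0) :
    ((n : ℝ) - 1) * ∫ θ, w θ ^ 2 ∂sphMeasure n ≤ ∫ θ, ‖sgrad w θ‖ ^ 2 ∂sphMeasure n := by
  have hw2 := hasBochnerIntegral_sphMeasure (w := fun θ ↦ w θ ^ 2) (hw.continuous.pow 2)
  have hgrad2 := hasBochnerIntegral_sphMeasure (w := fun θ ↦ ‖sgrad w θ‖ ^ 2)
    ((continuous_sgrad hw).norm.pow 2)
  obtain ⟨K, hK⟩ := lipschitzWith_radialExt hw (ρ := id) (LipschitzWith.id.lipschitzOnWith) rfl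
  have hnorm : Integrable (fun x : E n ↦ ‖x‖) (stdGaussian (E n)) :=
    (hasExpGrowth_of_lipschitzWith lipschitzWith_one_norm).integrable
      continuous_norm.aestronglyMeasurable
  have hext : ∫ x, radialExt id w x ∂stdGaussian (E n) = 0 := by
    simpa [hmean] using! (HasBochnerIntegral.polar (A := id) measurable_id (.of_integrable hnorm)
      (hasBochnerIntegral_sphMeasure hw.continuous)).2
  have hext2 : ∫ x, radialExt id w x ^ 2 ∂stdGaussian (E n) = n * ∫ θ, w θ ^ 2 ∂sphMeasure n := by
    simpa only [radialExt, mul_pow, id, finrank_euclideanSpace_fin] using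
      (HasBochnerIntegral.polar (A := (· ^ 2)) (by fun_prop)
        hasBochnerIntegral_sq_norm_stdGaussian hw2).2
  have hderiv2 : ∫ x, ‖fderiv ℝ (radialExt id w) x‖ ^ 2 ∂stdGaussian (E n) =
      ∫ θ, w θ ^ 2 ∂sphMeasure n + ∫ θ, ‖sgrad w θ‖ ^ 2 ∂sphMeasure n := by
    refine (integral_congr_ae ?_).trans (hw2.add hgrad2).angular.2
    filter_upwards [ae_stdGaussian_ne_zero] with x hx
    rw [norm_fderiv_radialExt_sq (hw.differentiable one_ne_zero) hx (hasDerivAt_id _), id,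
      div_self (norm_ne_zero_iff.2 hx)]
    simp
  have hpoincare := gaussian_poincare hK
  rw [hext, hext2, hderiv2] at hpoincare
  linarith

theorem sphere_poincare [NeZero n] {w : E n → ℝ} (hw : ContDiff ℝ 1 w) :
    ((n : ℝ) - 1) * (∫ θ, w θ ^ 2 ∂sphMeasure n - (∫ θ, w θ ∂sphMeasure n) ^ 2) ≤
      ∫ θ, ‖sgrad w θ‖ ^ 2 ∂sphMeasure n := by
  set m := ∫ θ, w θ ∂sphMeasure n with hm
  have hmean := hasBochnerIntegral_sphMeasure hw.continuous
  rw [← hm] at hmean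
  have hcentered := sphere_poincare_of_integral_eq_zero (hw.sub contDiff_const)
    ((hmean.sub (.const m)).2.trans (sub_self m))
  have hsq : ∫ θ, (w θ - m) ^ 2 ∂sphMeasure n = ∫ θ, w θ ^ 2 ∂sphMeasure n - m ^ 2 := by
    have hw2 := hasBochnerIntegral_sphMeasure (w := fun θ ↦ w θ ^ 2) (hw.continuous.pow 2)
    calc ∫ θ, (w θ - m) ^ 2 ∂sphMeasure n
        = ∫ θ, (w θ ^ 2 - 2 * m * w θ + m ^ 2) ∂sphMeasure n :=
          integral_congr_ae (ae_of_all _ fun θ ↦ by ring)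
      _ = ∫ θ, w θ ^ 2 ∂sphMeasure n - 2 * m * m + m ^ 2 :=
          ((hw2.sub (hmean.const_mul (2 * m))).add (.const (m ^ 2))).2
      _ = _ := by ring
  have hsgrad : sgrad (fun θ ↦ w θ - m) = sgrad w := by
    ext1 θ
    simp only [sgrad, gradient, fderiv_sub_const]
  rwa [hsq, hsgrad] at hcentered

lemma sgrad_add_const_mul_inner {w : E n → ℝ} (hw : Differentiable ℝ w) (t : ℝ) (v θ : E n) :
    sgrad (fun x ↦ w x + t * ⟪v, x⟫) θ = sgrad w θ + t • projPerp θ v := by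
  have hgrad : gradient (fun x ↦ w x + t * ⟪v, x⟫) θ = gradient w θ + t • v := by
    refine HasGradientAt.gradient ?_
    rw [hasGradientAt_iff_hasFDerivAt, map_add, map_smul]
    exact (hw θ).hasGradientAt.hasFDerivAt.add ((innerSL ℝ v).hasFDerivAt.const_mul t)
  rw [sgrad_eq_projPerp, hgrad, map_add, map_smul, ← sgrad_eq_projPerp]

lemma integral_add_const_mul_inner_sq [NeZero n] {w : E n → ℝ} (hw : Continuous w) (t : ℝ)
    (v : E n) : ∫ θ, (w θ + t * ⟪v, θ⟫) ^ 2 ∂sphMeasure n =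
      ∫ θ, w θ ^ 2 ∂sphMeasure n + 2 * t * ∫ θ, w θ * ⟪v, θ⟫ ∂sphMeasure n +
        t ^ 2 * (‖v‖ ^ 2 / n) := by
  have hcross := hasBochnerIntegral_sphMeasure (w := fun θ ↦ w θ * ⟪v, θ⟫) (by fun_prop)
  have hlin := hasBochnerIntegral_sphMeasure (n := n) (w := fun θ ↦ ⟪v, θ⟫ ^ 2) (by fun_prop)
  rw [integral_inner_sq_sphMeasure] at hlin
  have hw2 := hasBochnerIntegral_sphMeasure (w := fun θ ↦ w θ ^ 2) (hw.pow 2)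
  rw [← (hw2.add (hcross.const_mul (2 * t)) |>.add
    (hlin.const_mul (t ^ 2))).2]
  exact integral_congr_ae (ae_of_all _ fun θ ↦ by ring)

lemma integral_norm_sgrad_add_const_mul_inner_sq [NeZero n] {w : E n → ℝ}
    (hw : ContDiff ℝ 1 w) (t : ℝ) (v : E n) :
    ∫ θ, ‖sgrad (fun x ↦ w x + t * ⟪v, x⟫) θ‖ ^ 2 ∂sphMeasure n =
      ∫ θ, ‖sgrad w θ‖ ^ 2 ∂sphMeasure n + 2 * t * ∫ θ, ⟪sgrad w θ, v⟫ ∂sphMeasure n +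
        t ^ 2 * (‖v‖ ^ 2 - ‖v‖ ^ 2 / n) := by
  have hsgrad := continuous_sgrad hw
  have hcross := hasBochnerIntegral_sphMeasure (w := fun θ ↦ ⟪sgrad w θ, v⟫) (by fun_prop)
  have hlin := hasBochnerIntegral_sphMeasure (n := n) (w := fun θ ↦ ⟪v, θ⟫ ^ 2) (by fun_prop)
  rw [integral_inner_sq_sphMeasure] at hlin
  have hsgrad2 := hasBochnerIntegral_sphMeasure (w := fun θ ↦ ‖sgrad w θ‖ ^ 2) (hsgrad.norm.pow 2)
  rw [← (hsgrad2.add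
    (hcross.const_mul (2 * t)) |>.add (((HasBochnerIntegral.const (‖v‖ ^ 2)).sub hlin).const_mul
      (t ^ 2))).2]
  refine integral_congr_ae ?_
  filter_upwards [ae_sphMeasure_norm_eq_one] with θ hθ
  rw [sgrad_add_const_mul_inner (hw.differentiable one_ne_zero), norm_add_sq_real,
    real_inner_smul_right, norm_smul, mul_pow, norm_projPerp_sq hθ, projPerp_apply,
    inner_sub_right, real_inner_smul_right, sgrad_eq_projPerp, inner_projPerp_self hθ]
  simp only [Real.norm_eq_abs, sq_abs]
  ring

-- Linear functions are extremal in `sphere_poincare`, so the deficit of `w + t⟪v, ·⟫` is an affine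
-- function of `t`; being nonnegative, it is constant.
theorem integral_inner_sgrad [NeZero n] {w : E n → ℝ} (hw : ContDiff ℝ 1 w) (v : E n) :
    ∫ θ, ⟪sgrad w θ, v⟫ ∂sphMeasure n = ((n : ℝ) - 1) * ∫ θ, w θ * ⟪v, θ⟫ ∂sphMeasure n := by
  set slope := 2 * (∫ θ, ⟪sgrad w θ, v⟫ ∂sphMeasure n -
    ((n : ℝ) - 1) * ∫ θ, w θ * ⟪v, θ⟫ ∂sphMeasure n) with hslope
  set deficit := ∫ θ, ‖sgrad w θ‖ ^ 2 ∂sphMeasure n -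
    ((n : ℝ) - 1) * (∫ θ, w θ ^ 2 ∂sphMeasure n - (∫ θ, w θ ∂sphMeasure n) ^ 2) with hdeficit
  have haffine (t : ℝ) : 0 ≤ deficit + t * slope := by
    have hpoincare := sphere_poincare (hw.add (contDiff_const (c := t).mul
      (innerSL ℝ v).contDiff))
    have hlin := hasBochnerIntegral_sphMeasure (n := n) (w := fun θ ↦ ⟪v, θ⟫) (by fun_prop)
    rw [integral_inner_sphMeasure] at hlin
    have hmean : ∫ θ, (w θ + t * ⟪v, θ⟫) ∂sphMeasure n = ∫ θ, w θ ∂sphMeasure n := by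
      simpa using! ((hasBochnerIntegral_sphMeasure hw.continuous).add (hlin.const_mul t)).2
    simp only [innerSL_apply_apply] at hpoincare
    rw [hmean, integral_add_const_mul_inner_sq hw.continuous,
      integral_norm_sgrad_add_const_mul_inner_sq hw] at hpoincare
    have hn : (n : ℝ) ≠ 0 := NeZero.ne _
    have : t ^ 2 * (‖v‖ ^ 2 - ‖v‖ ^ 2 / n) = (n - 1) * (t ^ 2 * (‖v‖ ^ 2 / n)) := by
      field_simp
    rw [hdeficit, hslope]
    linarith
  have hslope0 : slope = 0 := by
    by_contra hne
    have := haffine ((-1 - deficit) / slope)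
    rw [div_mul_cancel₀ _ hne] at this
    linarith
  linarith

end SphereInequalities

section SphereLogSobolev

open ProbabilityTheory Topology
open NormedSpace (norm_normalize)

/-- A smooth approximation, as `ε → 0`, of the function equal to `1` on `(0, ∞)` and to `0` at
the origin; it truncates the singularity at `0` of a function of `x/|x|`. -/
def radialCutoff (ε r : ℝ) : ℝ := r ^ 2 / (r ^ 2 + ε)

lemma lipschitzOnWith_radialCutoff {ε : ℝ} (hε : 0 < ε) :
    LipschitzOnWith (Real.toNNReal (1 + 1 / ε)) (radialCutoff ε) (Set.Ici 0) := by
  refine LipschitzOnWith.of_dist_le_mul fun r hr s hs ↦ ?_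
  rw [Set.mem_Ici] at hr hs
  rw [Real.coe_toNNReal _ (by positivity), Real.dist_eq, Real.dist_eq]
  have hsub : radialCutoff ε r - radialCutoff ε s =
      (ε * (r + s) / ((r ^ 2 + ε) * (s ^ 2 + ε))) * (r - s) := by
    rw [radialCutoff, radialCutoff]
    field_simp
    ring
  rw [hsub, abs_mul]
  gcongr
  rw [abs_of_nonneg (by positivity), div_le_iff₀ (by positivity)]
  have hsum : r + s ≤ (1 + 1 / ε) * (r ^ 2 + s ^ 2 + ε) := by
    have : (1 + 1 / ε) * (r ^ 2 + s ^ 2 + ε) =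
        r ^ 2 + s ^ 2 + ε + 1 + (r ^ 2 + s ^ 2) / ε := by field_simp; ring
    rw [this]
    have : 0 ≤ (r ^ 2 + s ^ 2) / ε := by positivity
    nlinarith [sq_nonneg (r - 1), sq_nonneg (s - 1), sq_nonneg r, sq_nonneg s]
  calc ε * (r + s) ≤ ε * ((1 + 1 / ε) * (r ^ 2 + s ^ 2 + ε)) := by gcongr
    _ = (1 + 1 / ε) * (ε * (r ^ 2 + s ^ 2 + ε)) := by ring
    _ ≤ (1 + 1 / ε) * ((r ^ 2 + ε) * (s ^ 2 + ε)) := by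
        refine mul_le_mul_of_nonneg_left ?_ (by positivity)
        nlinarith [mul_nonneg (sq_nonneg r) (sq_nonneg s)]

lemma hasDerivAt_radialCutoff {ε : ℝ} (hε : 0 < ε) (r : ℝ) :
    HasDerivAt (radialCutoff ε) (2 * r * ε / (r ^ 2 + ε) ^ 2) r := by
  have hne : r ^ 2 + ε ≠ 0 := by positivity
  refine ((hasDerivAt_pow 2 r).div ((hasDerivAt_pow 2 r).add_const ε) hne).congr_deriv ?_
  field_simp
  ring

lemma measurable_radialCutoff (ε : ℝ) : Measurable (radialCutoff ε) := by
  unfold radialCutoff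
  fun_prop

lemma radialCutoff_nonneg {ε : ℝ} (hε : 0 < ε) (r : ℝ) : 0 ≤ radialCutoff ε r := by
  unfold radialCutoff
  positivity

lemma radialCutoff_le_one {ε : ℝ} (hε : 0 < ε) (r : ℝ) : radialCutoff ε r ≤ 1 := by
  unfold radialCutoff
  rw [div_le_one (by positivity)]
  linarith

lemma radialCutoff_div_sq_le {ε r : ℝ} (hε : 0 < ε) (hr : 0 < r) :
    (radialCutoff ε r / r) ^ 2 ≤ (r ^ 2)⁻¹ := by
  rw [← inv_pow, inv_eq_one_div]
  have := radialCutoff_nonneg hε r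
  gcongr
  exact radialCutoff_le_one hε r

lemma deriv_radialCutoff_sq_le {ε r : ℝ} (hε : 0 < ε) (hr : 0 < r) :
    (2 * r * ε / (r ^ 2 + ε) ^ 2) ^ 2 ≤ (r ^ 2)⁻¹ := by
  rw [← inv_pow]
  gcongr
  rw [div_le_iff₀ (by positivity), inv_mul_eq_div, le_div_iff₀ hr]
  nlinarith [sq_nonneg (r ^ 2 - ε), sq_nonneg (r ^ 2 + ε)]

lemma tendsto_radialCutoff {r : ℝ} (hr : r ≠ 0) :
    Tendsto (fun ε ↦ radialCutoff ε r) (𝓝[>] 0) (𝓝 1) := by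
  have hcont : ContinuousAt (fun ε ↦ radialCutoff ε r) 0 :=
    continuousAt_const.div (continuousAt_const.add continuousAt_id) (by simpa using hr)
  have hlim := hcont.tendsto.mono_left (nhdsWithin_le_nhds (s := Set.Ioi 0))
  rwa [radialCutoff, add_zero, div_self (pow_ne_zero 2 hr)] at hlim

lemma tendsto_deriv_radialCutoff {r : ℝ} (hr : r ≠ 0) :
    Tendsto (fun ε ↦ 2 * r * ε / (r ^ 2 + ε) ^ 2) (𝓝[>] 0) (𝓝 0) := by
  have hcont : ContinuousAt (fun ε ↦ 2 * r * ε / (r ^ 2 + ε) ^ 2) 0 :=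
    ContinuousAt.div (by fun_prop) (by fun_prop) (by simpa using hr)
  have hlim := hcont.tendsto.mono_left (nhdsWithin_le_nhds (s := Set.Ioi 0))
  simpa using hlim

lemma tendsto_radialExt_radialCutoff (u : E n → ℝ) {x : E n} (hx : x ≠ 0) :
    Tendsto (fun ε ↦ radialExt (radialCutoff ε) u x) (𝓝[>] 0) (𝓝 (u (‖x‖⁻¹ • x))) := by
  simpa [radialExt] using
    (tendsto_radialCutoff (norm_ne_zero_iff.2 hx)).mul_const (u (‖x‖⁻¹ • x))

lemma measurable_radialExt_radialCutoff {u : E n → ℝ} (hu : Continuous u) (ε : ℝ) :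
    Measurable (radialExt (radialCutoff ε) u) :=
  ((measurable_radialCutoff ε).comp measurable_norm).mul (hu.measurable.comp (by fun_prop))

lemma abs_radialExt_radialCutoff_le {ε : ℝ} (hε : 0 < ε) (u : E n → ℝ) (x : E n) :
    |radialExt (radialCutoff ε) u x| ≤ |u (‖x‖⁻¹ • x)| := by
  rw [radialExt, abs_mul, abs_of_nonneg (radialCutoff_nonneg hε _)]
  exact mul_le_of_le_one_left (abs_nonneg _) (radialCutoff_le_one hε _)

lemma exists_forall_norm_le_of_continuous {F : Type*} [SeminormedAddCommGroup F] {w : E n → F}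
    (hw : Continuous w) : ∃ M, ∀ θ, ‖θ‖ = 1 → ‖w θ‖ ≤ M := by
  obtain ⟨M, hM⟩ := (isCompact_sphere (0 : E n) 1).exists_bound_of_continuousOn hw.continuousOn
  exact ⟨M, fun θ hθ ↦ hM θ (mem_sphere_zero_iff_norm.2 hθ)⟩

lemma tendsto_integral_comp_radialExt_radialCutoff [NeZero n] {Φ : ℝ → ℝ} (hΦ : Continuous Φ)
    {u : E n → ℝ} (hu : Continuous u) :
    Tendsto (fun ε ↦ ∫ x, Φ (radialExt (radialCutoff ε) u x) ∂stdGaussian (E n)) (𝓝[>] 0)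
      (𝓝 (∫ θ, Φ (u θ) ∂sphMeasure n)) := by
  obtain ⟨M, hM⟩ := exists_forall_norm_le_of_continuous hu
  obtain ⟨B, hB⟩ := (isCompact_Icc (a := -M) (b := M)).exists_bound_of_continuousOn
    hΦ.continuousOn
  rw [← (hasBochnerIntegral_sphMeasure (w := fun θ ↦ Φ (u θ)) (hΦ.comp hu)).angular.2]
  refine tendsto_integral_filter_of_dominated_convergence (fun _ ↦ B)
    (Eventually.of_forall fun ε ↦
      (hΦ.measurable.comp (measurable_radialExt_radialCutoff hu ε)).aestronglyMeasurable)
    ?_ (integrable_const _) ?_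
  · filter_upwards [self_mem_nhdsWithin] with ε hε
    filter_upwards [ae_stdGaussian_ne_zero] with x hx
    exact hB _ (abs_le.1 ((abs_radialExt_radialCutoff_le hε u x).trans (hM _ (norm_normalize hx))))
  · filter_upwards [ae_stdGaussian_ne_zero] with x hx
    exact (hΦ.tendsto _).comp (tendsto_radialExt_radialCutoff u hx)

lemma norm_fderiv_radialExt_radialCutoff_sq {u : E n → ℝ} (hu : Differentiable ℝ u) {ε : ℝ}
    (hε : 0 < ε) {x : E n} (hx : x ≠ 0) :
    ‖fderiv ℝ (radialExt (radialCutoff ε) u) x‖ ^ 2 =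
      (2 * ‖x‖ * ε / (‖x‖ ^ 2 + ε) ^ 2) ^ 2 * u (‖x‖⁻¹ • x) ^ 2 +
        (radialCutoff ε ‖x‖ / ‖x‖) ^ 2 * ‖sgrad u (‖x‖⁻¹ • x)‖ ^ 2 :=
  norm_fderiv_radialExt_sq hu hx (hasDerivAt_radialCutoff hε _)

lemma exp_mul_norm_fderiv_radialExt_radialCutoff_sq_le {u : E n → ℝ} (hu : Differentiable ℝ u)
    {M S : ℝ} (hM : ∀ θ, ‖θ‖ = 1 → ‖u θ‖ ≤ M) (hS : ∀ θ, ‖θ‖ = 1 → ‖sgrad u θ‖ ≤ S) {ε : ℝ}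
    (hε : 0 < ε) {x : E n} (hx : x ≠ 0) :
    Real.exp (radialExt (radialCutoff ε) u x) *
        ‖fderiv ℝ (radialExt (radialCutoff ε) u) x‖ ^ 2 ≤
      Real.exp M * (M ^ 2 + S ^ 2) * (‖x‖ ^ 2)⁻¹ := by
  have hx0 : 0 < ‖x‖ := norm_pos_iff.2 hx
  have hMx := hM _ (norm_normalize hx)
  have hM2 : u (‖x‖⁻¹ • x) ^ 2 ≤ M ^ 2 := sq_le_sq' (abs_le.1 hMx).1 (abs_le.1 hMx).2
  rw [norm_fderiv_radialExt_radialCutoff_sq hu hε hx]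
  calc _ ≤ Real.exp M * ((‖x‖ ^ 2)⁻¹ * M ^ 2 + (‖x‖ ^ 2)⁻¹ * S ^ 2) := by
        gcongr
        · exact (le_abs_self _).trans ((abs_radialExt_radialCutoff_le hε u x).trans hMx)
        · exact deriv_radialCutoff_sq_le hε hx0
        · exact radialCutoff_div_sq_le hε hx0
        · exact hS _ (norm_normalize hx)
    _ = _ := by ring

lemma tendsto_exp_mul_norm_fderiv_radialExt_radialCutoff_sq {u : E n → ℝ}
    (hu : Differentiable ℝ u) {x : E n} (hx : x ≠ 0) :
    Tendsto (fun ε ↦ Real.exp (radialExt (radialCutoff ε) u x) *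
        ‖fderiv ℝ (radialExt (radialCutoff ε) u) x‖ ^ 2) (𝓝[>] 0)
      (𝓝 ((‖x‖ ^ 2)⁻¹ * (Real.exp (u (‖x‖⁻¹ • x)) * ‖sgrad u (‖x‖⁻¹ • x)‖ ^ 2))) := by
  have hx0 : ‖x‖ ≠ 0 := norm_ne_zero_iff.2 hx
  have hexp := (Real.continuous_exp.tendsto _).comp (tendsto_radialExt_radialCutoff u hx)
  have hlim := hexp.mul
    ((((tendsto_deriv_radialCutoff hx0).pow 2).mul_const (u (‖x‖⁻¹ • x) ^ 2)).add
      ((((tendsto_radialCutoff hx0).div_const ‖x‖).pow 2).mul_const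
        (‖sgrad u (‖x‖⁻¹ • x)‖ ^ 2)))
  have hval : Real.exp (u (‖x‖⁻¹ • x)) * ((0 : ℝ) ^ 2 * u (‖x‖⁻¹ • x) ^ 2 +
      (1 / ‖x‖) ^ 2 * ‖sgrad u (‖x‖⁻¹ • x)‖ ^ 2) =
      (‖x‖ ^ 2)⁻¹ * (Real.exp (u (‖x‖⁻¹ • x)) * ‖sgrad u (‖x‖⁻¹ • x)‖ ^ 2) := by
    rw [one_div, inv_pow]
    ring
  rw [hval] at hlim
  refine hlim.congr' ?_
  filter_upwards [self_mem_nhdsWithin] with ε hε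
  rw [norm_fderiv_radialExt_radialCutoff_sq hu hε hx]
  rfl

lemma tendsto_integral_exp_mul_norm_fderiv_radialExt_radialCutoff_sq (hn : 3 ≤ n)
    {u : E n → ℝ} (hu : ContDiff ℝ 1 u) :
    Tendsto (fun ε ↦ ∫ x, Real.exp (radialExt (radialCutoff ε) u x) *
        ‖fderiv ℝ (radialExt (radialCutoff ε) u) x‖ ^ 2 ∂stdGaussian (E n)) (𝓝[>] 0)
      (𝓝 (1 / ((n : ℝ) - 2) * ∫ θ, Real.exp (u θ) * ‖sgrad u θ‖ ^ 2 ∂sphMeasure n)) := by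
  have : NeZero n := ⟨by omega⟩
  obtain ⟨M, hM⟩ := exists_forall_norm_le_of_continuous hu.continuous
  obtain ⟨S, hS⟩ := exists_forall_norm_le_of_continuous (continuous_sgrad hu)
  have hinv : HasBochnerIntegral (stdGaussian (E n)) (fun x ↦ (‖x‖ ^ 2)⁻¹)
      (1 / ((n : ℝ) - 2)) := by
    simpa only [finrank_euclideanSpace_fin] using
      hasBochnerIntegral_inv_sq_norm_stdGaussian (V := E n)
        (by rw [finrank_euclideanSpace_fin]; omega)
  have hlimit := HasBochnerIntegral.polar (A := fun r ↦ (r ^ 2)⁻¹) (by fun_prop) hinv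
    (hasBochnerIntegral_sphMeasure (w := fun θ ↦ Real.exp (u θ) * ‖sgrad u θ‖ ^ 2)
      (hu.continuous.rexp.mul ((continuous_sgrad hu).norm.pow 2)))
  have hdiff := hu.differentiable one_ne_zero
  rw [← hlimit.2]
  refine tendsto_integral_filter_of_dominated_convergence
    (fun x ↦ Real.exp M * (M ^ 2 + S ^ 2) * (‖x‖ ^ 2)⁻¹)
    (Eventually.of_forall fun ε ↦
      ((measurable_radialExt_radialCutoff hu.continuous ε).exp.mul
        ((measurable_fderiv ℝ _).norm.pow_const 2)).aestronglyMeasurable)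
    ?_ (hinv.1.const_mul _) ?_
  · filter_upwards [self_mem_nhdsWithin] with ε hε
    filter_upwards [ae_stdGaussian_ne_zero] with x hx
    rw [Real.norm_of_nonneg (by positivity)]
    exact exp_mul_norm_fderiv_radialExt_radialCutoff_sq_le hdiff hM hS hε hx
  · filter_upwards [ae_stdGaussian_ne_zero] with x hx
    exact tendsto_exp_mul_norm_fderiv_radialExt_radialCutoff_sq hdiff hx

theorem sphere_logSobolev (hn : 3 ≤ n) {u : E n → ℝ} (hu : ContDiff ℝ 1 u) :
    entExp (sphMeasure n) u ≤
      1 / (2 * ((n : ℝ) - 2)) * ∫ θ, Real.exp (u θ) * ‖sgrad u θ‖ ^ 2 ∂sphMeasure n := by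
  have : NeZero n := ⟨by omega⟩
  have hexp := tendsto_integral_comp_radialExt_radialCutoff Real.continuous_exp hu.continuous
  have hmul := tendsto_integral_comp_radialExt_radialCutoff
    (Real.continuous_exp.mul continuous_id) hu.continuous
  have hpos : 0 < ∫ θ, Real.exp (u θ) ∂sphMeasure n :=
    integral_exp_pos (integrable_sphMeasure hu.continuous.rexp)
  have hgrad := (tendsto_integral_exp_mul_norm_fderiv_radialExt_radialCutoff_sq hn hu).const_mul
    (1 / 2)
  have hgauss : ∀ᶠ ε in 𝓝[>] (0 : ℝ), entExp (stdGaussian (E n)) (radialExt (radialCutoff ε) u) ≤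
      1 / 2 * ∫ x, Real.exp (radialExt (radialCutoff ε) u x) *
        ‖fderiv ℝ (radialExt (radialCutoff ε) u) x‖ ^ 2 ∂stdGaussian (E n) := by
    filter_upwards [self_mem_nhdsWithin] with ε hε
    obtain ⟨K, hK⟩ := lipschitzWith_radialExt hu (lipschitzOnWith_radialCutoff hε)
      (by simp [radialCutoff])
    exact gaussian_logSobolev hK
  refine (le_of_tendsto_of_tendsto (hmul.sub (hexp.mul (hexp.log hpos.ne'))) hgrad
    hgauss).trans_eq ?_
  rw [← mul_assoc, one_div_mul_one_div]

end SphereLogSobolev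

section SphereExponentialMoments

open ProbabilityTheory

lemma sgrad_const_mul {q : E n → ℝ} (hq : Differentiable ℝ q) (s : ℝ) (θ : E n) :
    sgrad (fun θ ↦ s * q θ) θ = s • sgrad q θ := by
  have hgrad : gradient (fun θ ↦ s * q θ) θ = s • gradient q θ := by
    refine HasGradientAt.gradient ?_
    rw [hasGradientAt_iff_hasFDerivAt, map_smul]
    exact (hq θ).hasGradientAt.hasFDerivAt.const_mul s
  simp only [sgrad, hgrad, real_inner_smul_left]
  module

lemma integrableExpSet_sphMeasure [NeZero n] {q : E n → ℝ} (hq : Continuous q) :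
    integrableExpSet q (sphMeasure n) = Set.univ :=
  Set.eq_univ_of_forall fun _ ↦ integrable_sphMeasure (by fun_prop)

lemma entExp_const_mul_sphMeasure_le (hn : 3 ≤ n) {q g : E n → ℝ} (hq : ContDiff ℝ 1 q)
    (hg : Continuous g) (h : ∀ θ, ‖θ‖ = 1 → ‖sgrad q θ‖ ^ 2 ≤ g θ) (t : ℝ) :
    entExp (sphMeasure n) (fun θ ↦ t * q θ) ≤
      1 / (2 * ((n : ℝ) - 2)) * t ^ 2 * ∫ θ, Real.exp (t * q θ) * g θ ∂sphMeasure n := by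
  have : NeZero n := ⟨by omega⟩
  have hn' : (3 : ℝ) ≤ n := by exact_mod_cast hn
  have hqc := hq.continuous
  have hsc := continuous_sgrad hq
  refine (sphere_logSobolev hn (u := fun θ ↦ t * q θ) (contDiff_const.mul hq)).trans ?_
  simp only [sgrad_const_mul (hq.differentiable one_ne_zero)]
  rw [mul_assoc, ← integral_const_mul (t ^ 2)]
  refine mul_le_mul_of_nonneg_left (integral_mono_ae (integrable_sphMeasure (by fun_prop))
    (integrable_sphMeasure (by fun_prop)) ?_) (one_div_nonneg.2 (by linarith))
  filter_upwards [ae_sphMeasure_norm_eq_one] with θ hθ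
  rw [norm_smul, mul_pow, Real.norm_eq_abs, sq_abs, mul_left_comm]
  gcongr
  exact h θ hθ

lemma cgf_le_of_sgrad_sq_le (hn : 3 ≤ n) {q : E n → ℝ} (hq : ContDiff ℝ 1 q)
    (h : ∀ θ, ‖θ‖ = 1 → ‖sgrad q θ‖ ^ 2 ≤ 4 * q θ) {t : ℝ} (ht : 0 < t)
    (ht' : 2 / ((n : ℝ) - 2) * t < 1) :
    cgf q (sphMeasure n) t ≤
      t * (∫ θ, q θ ∂sphMeasure n) / (1 - 2 / ((n : ℝ) - 2) * t) := by
  have : NeZero n := ⟨by omega⟩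
  have hqc := hq.continuous
  refine cgf_le_of_entExp_le_integral_mul_exp (integrableExpSet_sphMeasure hqc) ht ht'
    fun r _ ↦ (entExp_const_mul_sphMeasure_le hn hq (by fun_prop) h r).trans_eq ?_
  have hpull : ∫ θ, Real.exp (r * q θ) * (4 * q θ) ∂sphMeasure n =
      4 * ∫ θ, q θ * Real.exp (r * q θ) ∂sphMeasure n := by
    rw [← integral_const_mul]
    exact integral_congr_ae (ae_of_all _ fun θ ↦ by ring)
  rw [hpull, one_div, mul_inv]
  ring

/- The logarithmic Sobolev inequality bounds the entropy of `exp (t * F)` by half of the integral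
of `g = v * t ^ 2 * ‖gradient F‖ ^ 2` against it, and the Gibbs variational principle lets the
entropy absorb that half at the price of the exponential moment of `g`. -/
lemma cgf_le_of_sgrad_gradient_sq_le (hn : 3 ≤ n) {F : E n → ℝ} (hF : ContDiff ℝ 1 F)
    (hq : ContDiff ℝ 1 fun θ ↦ ‖gradient F θ‖ ^ 2)
    (h : ∀ θ, ‖θ‖ = 1 → ‖sgrad (fun θ ↦ ‖gradient F θ‖ ^ 2) θ‖ ^ 2 ≤ 4 * ‖gradient F θ‖ ^ 2)
    {v s : ℝ} (hv : v = 1 / ((n : ℝ) - 2)) (hs : 0 < s) (hs' : 2 * (v * s) ^ 2 < 1) :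
    cgf F (sphMeasure n) s ≤ s * ∫ θ, F θ ∂sphMeasure n +
      s ^ 2 * (v * (∫ θ, ‖gradient F θ‖ ^ 2 ∂sphMeasure n) / (1 - 2 * (v * s) ^ 2)) := by
  have : NeZero n := ⟨by omega⟩
  have hn' : (3 : ℝ) ≤ n := by exact_mod_cast hn
  have hv0 : 0 < v := hv ▸ one_div_pos.2 (by linarith)
  have hFc := hF.continuous
  have hqc := hq.continuous
  set Q := ∫ θ, ‖gradient F θ‖ ^ 2 ∂sphMeasure n with hQ
  have : 0 ≤ Q := integral_nonneg fun θ ↦ by positivity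
  refine (cgf_le_of_entExp_le_mgf (integrableExpSet_sphMeasure hFc) hs
    (B := v * Q / (1 - 2 * (v * s) ^ 2)) fun t ⟨ht, hts⟩ ↦ ?_).trans_eq (by ring)
  have hlogSobolev := entExp_const_mul_sphMeasure_le hn hF hqc (fun θ ↦ norm_sgrad_sq_le F) t
  have hgibbs := integral_exp_mul_le_entExp_add (μ := sphMeasure n) (u := fun θ ↦ t * F θ)
    (g := fun θ ↦ v * t ^ 2 * ‖gradient F θ‖ ^ 2) (integrable_sphMeasure (by fun_prop))
    (integrable_sphMeasure (by fun_prop)) (integrable_sphMeasure (by fun_prop))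
    (integrable_sphMeasure (by fun_prop))
  have hvt : 2 / ((n : ℝ) - 2) * (v * t ^ 2) = 2 * (v * t) ^ 2 := by rw [hv]; ring
  have hvts : 2 * (v * t) ^ 2 ≤ 2 * (v * s) ^ 2 := by gcongr
  have hcgf : cgf (fun θ ↦ ‖gradient F θ‖ ^ 2) (sphMeasure n) (v * t ^ 2) ≤
      v * Q / (1 - 2 * (v * s) ^ 2) * t ^ 2 := by
    refine (cgf_le_of_sgrad_sq_le hn hq h (by positivity) (by linarith)).trans ?_
    rw [hvt, ← hQ, div_mul_eq_mul_div]
    exact div_le_div₀ (by positivity) (by linarith) (by linarith) (by linarith)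
  have hpull : ∫ θ, Real.exp (t * F θ) * (v * t ^ 2 * ‖gradient F θ‖ ^ 2) ∂sphMeasure n =
      v * t ^ 2 * ∫ θ, Real.exp (t * F θ) * ‖gradient F θ‖ ^ 2 ∂sphMeasure n := by
    rw [← integral_const_mul]
    exact integral_congr_ae (ae_of_all _ fun θ ↦ by ring)
  have hhalf : 1 / (2 * ((n : ℝ) - 2)) = v / 2 := by rw [hv, one_div, one_div, mul_inv]; ring
  rw [hhalf] at hlogSobolev
  rw [hpull] at hgibbs
  have := mul_le_mul_of_nonneg_left hcgf (mgf_nonneg (X := F) (μ := sphMeasure n) (t := t))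
  change _ ≤ _ + mgf F (sphMeasure n) t *
    cgf (fun θ ↦ ‖gradient F θ‖ ^ 2) (sphMeasure n) (v * t ^ 2) at hgibbs
  linarith

end SphereExponentialMoments

section GradientSecondMoment

variable {F : E n → ℝ}

lemma contDiff_gradient (hF : ContDiff ℝ 2 F) : ContDiff ℝ 1 (gradient F) :=
  (InnerProductSpace.toDual ℝ (E n)).symm.contDiff.comp (hF.fderiv_right (m := 1) (by norm_num))

lemma contDiff_gradient_apply (hF : ContDiff ℝ 2 F) (i : Fin n) :
    ContDiff ℝ 1 fun x ↦ gradient F x i :=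
  (EuclideanSpace.proj (𝕜 := ℝ) i : E n →L[ℝ] ℝ).contDiff.comp (contDiff_gradient hF)

lemma hasFDerivAt_gradient (hF : ContDiff ℝ 2 F) (x : E n) :
    HasFDerivAt (gradient F) (hess F x) x :=
  ((contDiff_gradient hF).differentiable one_ne_zero x).hasFDerivAt

lemma inner_gradient (w : E n → ℝ) (θ v : E n) : ⟪gradient w θ, v⟫ = fderiv ℝ w θ v := by
  rw [← toDual_gradient, InnerProductSpace.toDual_apply_apply]

lemma gradient_gradient_apply (hF : ContDiff ℝ 2 F) (θ : E n) (i j : Fin n) :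
    gradient (fun x ↦ gradient F x i) θ j = hess F θ (EuclideanSpace.single j 1) i := by
  have hcomp : HasFDerivAt (fun x ↦ gradient F x i)
      ((EuclideanSpace.proj (𝕜 := ℝ) i : E n →L[ℝ] ℝ).comp (hess F θ)) θ :=
    (EuclideanSpace.proj (𝕜 := ℝ) i : E n →L[ℝ] ℝ).hasFDerivAt.comp θ (hasFDerivAt_gradient hF θ)
  have h := inner_gradient (fun x ↦ gradient F x i) θ (EuclideanSpace.single j 1)
  rw [hcomp.fderiv, EuclideanSpace.inner_single_right] at h
  simpa using h

lemma sum_norm_gradient_gradient_sq (hF : ContDiff ℝ 2 F) (θ : E n) :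
    ∑ i, ‖gradient (fun x ↦ gradient F x i) θ‖ ^ 2 = hsNormSq (hess F θ) := by
  simp only [EuclideanSpace.real_norm_sq_eq, gradient_gradient_apply hF, hsNormSq]
  exact Finset.sum_comm

variable [NeZero n]

lemma hasBochnerIntegral_inner_sphMeasure {g : E n → E n} (hg : Continuous g) (v : E n) :
    HasBochnerIntegral (sphMeasure n) (fun θ ↦ ⟪v, g θ⟫) ⟪v, ∫ θ, g θ ∂sphMeasure n⟫ :=
  ⟨integrable_sphMeasure (by fun_prop),
    (innerSL ℝ v).integral_comp_comm (integrable_sphMeasure hg)⟩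

lemma hasBochnerIntegral_inner_mul_inner_sphMeasure (v w : E n) :
    HasBochnerIntegral (sphMeasure n) (fun θ ↦ ⟪v, θ⟫ * ⟪w, θ⟫) (⟪v, w⟫ / n) := by
  refine ⟨integrable_sphMeasure (by fun_prop), ?_⟩
  have hsq (u : E n) := hasBochnerIntegral_sphMeasure (w := fun θ ↦ ⟪u, θ⟫ ^ 2) (by fun_prop)
  simp only [integral_inner_sq_sphMeasure] at hsq
  have hpolar := (((hsq (v + w)).sub (hsq (v - w))).const_mul (1 / 4)).2
  convert! hpolar using 1
  · congr! 2 with θ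
    simp only [inner_add_left, inner_sub_left]
    ring
  · rw [norm_add_sq_real, norm_sub_sq_real]
    ring

lemma integral_norm_sub_integral_sq {g : E n → E n} (hg : Continuous g) :
    ∫ θ, ‖g θ - ∫ η, g η ∂sphMeasure n‖ ^ 2 ∂sphMeasure n =
      ∫ θ, ‖g θ‖ ^ 2 ∂sphMeasure n - ‖∫ θ, g θ ∂sphMeasure n‖ ^ 2 := by
  set m := ∫ θ, g θ ∂sphMeasure n with hm
  have hinner := hasBochnerIntegral_inner_sphMeasure hg m
  rw [← hm, real_inner_self_eq_norm_sq] at hinner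
  have h := (((hasBochnerIntegral_sphMeasure (w := fun θ ↦ ‖g θ‖ ^ 2) (by fun_prop)).sub
    (hinner.const_mul 2)).add (.const (‖m‖ ^ 2))).2
  simp only [norm_sub_sq_real, real_inner_comm m]
  rw [h]
  ring

theorem integral_norm_gradient_sub_integral_sq_le (hF : ContDiff ℝ 2 F) :
    ((n : ℝ) - 1) * ∫ θ, ‖gradient F θ - ∫ η, gradient F η ∂sphMeasure n‖ ^ 2 ∂sphMeasure n ≤
      ∫ θ, hsNormSq (hess F θ) ∂sphMeasure n := by
  have hg := (contDiff_gradient hF).continuous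
  have hgi (i : Fin n) := contDiff_gradient_apply hF i
  have hnorm : ∫ θ, ‖gradient F θ‖ ^ 2 ∂sphMeasure n =
      ∑ i, ∫ θ, gradient F θ i ^ 2 ∂sphMeasure n := by
    simp only [EuclideanSpace.real_norm_sq_eq]
    exact integral_finsetSum _ fun i _ ↦ integrable_sphMeasure ((hgi i).continuous.pow 2)
  have hmean : ‖∫ θ, gradient F θ ∂sphMeasure n‖ ^ 2 =
      ∑ i, (∫ θ, gradient F θ i ∂sphMeasure n) ^ 2 := by
    rw [EuclideanSpace.real_norm_sq_eq]
    congr! 2 with i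
    exact ((EuclideanSpace.proj (𝕜 := ℝ) i : E n →L[ℝ] ℝ).integral_comp_comm
      (integrable_sphMeasure hg)).symm
  have hhess : ∫ θ, hsNormSq (hess F θ) ∂sphMeasure n =
      ∑ i, ∫ θ, ‖gradient (fun x ↦ gradient F x i) θ‖ ^ 2 ∂sphMeasure n := by
    simp only [← sum_norm_gradient_gradient_sq hF]
    exact integral_finsetSum _ fun i _ ↦
      integrable_sphMeasure ((continuous_gradient (hgi i)).norm.pow 2)
  rw [integral_norm_sub_integral_sq hg, hnorm, hmean, hhess, ← Finset.sum_sub_distrib,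
    Finset.mul_sum]
  refine Finset.sum_le_sum fun i _ ↦ (sphere_poincare (hgi i)).trans ?_
  refine integral_mono_ae (integrable_sphMeasure ((continuous_sgrad (hgi i)).norm.pow 2))
    (integrable_sphMeasure ((continuous_gradient (hgi i)).norm.pow 2)) ?_
  filter_upwards [ae_sphMeasure_norm_eq_one] with θ hθ using norm_sgrad_sq_le _ hθ

lemma integral_inner_gradient_sub_mul_inner (hF : ContDiff ℝ 1 F) (m w : E n) :
    ∫ θ, ⟪gradient F θ - m, θ⟫ * ⟪w, θ⟫ ∂sphMeasure n =
      ⟪w, ∫ θ, gradient F θ ∂sphMeasure n⟫ - ((n : ℝ) - 1) * ⟪w, ∫ θ, F θ • θ ∂sphMeasure n⟫ -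
        ⟪m, w⟫ / n := by
  have hg := continuous_gradient hF
  have hFc := hF.continuous
  have hlinear := hasBochnerIntegral_inner_sphMeasure (g := fun θ ↦ F θ • θ) (by fun_prop) w
  have hsg := continuous_sgrad hF
  have hibp := hasBochnerIntegral_sphMeasure (w := fun θ ↦ ⟪sgrad F θ, w⟫) (by fun_prop)
  simp only [real_inner_smul_right] at hlinear
  rw [integral_inner_sgrad hF, hlinear.2] at hibp
  rw [← (((hasBochnerIntegral_inner_sphMeasure hg w).sub hibp).sub
    (hasBochnerIntegral_inner_mul_inner_sphMeasure m w)).2]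
  congr! 2 with θ
  simp only [sgrad, inner_sub_left, real_inner_smul_left, real_inner_comm w (gradient F θ),
    real_inner_comm w θ]
  ring

/- For a linear function `F` the mean of the gradient is exactly `n • ∫ F θ • θ`. -/
lemma norm_integral_gradient_sub_smul_sq_le (hn : 2 ≤ n) (hF : ContDiff ℝ 1 F) :
    ‖∫ θ, gradient F θ ∂sphMeasure n - (n : ℝ) • ∫ θ, F θ • θ ∂sphMeasure n‖ ^ 2 ≤
      n / ((n : ℝ) - 1) ^ 2 *
        ∫ θ, ‖gradient F θ - ∫ η, gradient F η ∂sphMeasure n‖ ^ 2 ∂sphMeasure n := by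
  have hn0 : (0 : ℝ) < n := by positivity
  have hn1 : (0 : ℝ) < n - 1 := by
    have : (2 : ℝ) ≤ n := by exact_mod_cast hn
    linarith
  have hg := continuous_gradient hF
  set m := ∫ θ, gradient F θ ∂sphMeasure n with hm
  set c := ∫ θ, F θ • θ ∂sphMeasure n with hc
  set w := m - (n : ℝ) • c with hw
  have hcross := hasBochnerIntegral_sphMeasure
    (w := fun θ ↦ ⟪gradient F θ - m, θ⟫ * ⟪w, θ⟫) (by fun_prop)
  have hcrossw : ⟪w, m⟫ - ((n : ℝ) - 1) * ⟪w, c⟫ - ⟪m, w⟫ / n = (n - 1) / n * ‖w‖ ^ 2 := by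
    have hnorm : ‖w‖ ^ 2 = ⟪w, m⟫ - n * ⟪w, c⟫ := by
      rw [← real_inner_smul_right, ← inner_sub_right, ← hw, real_inner_self_eq_norm_sq]
    rw [real_inner_comm w m, hnorm]
    field_simp
    ring
  rw [integral_inner_gradient_sub_mul_inner hF, ← hm, ← hc, hcrossw] at hcross
  have hlinear := hasBochnerIntegral_sphMeasure (w := fun θ ↦ ⟪w, θ⟫ ^ 2) (by fun_prop)
  rw [integral_inner_sq_sphMeasure] at hlinear
  have hvar := hasBochnerIntegral_sphMeasure (w := fun θ ↦ ‖gradient F θ - m‖ ^ 2) (by fun_prop)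
  have hyoung := (hcross.const_mul (2 * ((n : ℝ) - 1))).mono_ae
    (hvar.add (hlinear.const_mul (((n : ℝ) - 1) ^ 2))) <| by
      filter_upwards [ae_sphMeasure_norm_eq_one] with θ hθ
      have hle := abs_real_inner_le_norm (gradient F θ - m) θ
      rw [hθ, mul_one] at hle
      have := sq_le_sq' (neg_le_of_abs_le hle) (le_of_abs_le hle)
      linarith [sq_nonneg (⟪gradient F θ - m, θ⟫ - (n - 1) * ⟪w, θ⟫)]
  rw [← sub_le_iff_le_add] at hyoung
  rw [div_mul_eq_mul_div, le_div_iff₀ (by positivity), ← div_le_iff₀' hn0]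
  refine (le_of_eq ?_).trans hyoung
  field_simp
  ring

theorem integral_norm_gradient_sq_le (hn : 2 ≤ n) (hF : ContDiff ℝ 2 F) {ε : ℝ} (hε : 0 < ε) :
    ∫ θ, ‖gradient F θ‖ ^ 2 ∂sphMeasure n ≤
      (1 + ε) * (n ^ 2 * ‖∫ θ, F θ • θ ∂sphMeasure n‖ ^ 2) +
      ((1 + 1 / ε) * (n / ((n : ℝ) - 1) ^ 3) + 1 / ((n : ℝ) - 1)) *
        ∫ θ, hsNormSq (hess F θ) ∂sphMeasure n := by
  have hn1 : (0 : ℝ) < n - 1 := by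
    have : (2 : ℝ) ≤ n := by exact_mod_cast hn
    linarith
  have hvar := integral_norm_gradient_sub_integral_sq_le hF
  have hmean := norm_integral_gradient_sub_smul_sq_le hn (hF.of_le (by norm_num))
  have hsplit := integral_norm_sub_integral_sq (contDiff_gradient hF).continuous
  set m := ∫ θ, gradient F θ ∂sphMeasure n
  set c := ∫ θ, F θ • θ ∂sphMeasure n
  set V := ∫ θ, ‖gradient F θ - m‖ ^ 2 ∂sphMeasure n
  set H := ∫ θ, hsNormSq (hess F θ) ∂sphMeasure n
  have hV : V ≤ H / (n - 1) := by rwa [le_div_iff₀' hn1]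
  have hm : ‖m‖ ^ 2 ≤ (1 + ε) * (n ^ 2 * ‖c‖ ^ 2) + (1 + 1 / ε) * ‖m - (n : ℝ) • c‖ ^ 2 := by
    have htri : ‖m‖ ≤ n * ‖c‖ + ‖m - (n : ℝ) • c‖ := by
      simpa [norm_smul] using norm_add_le ((n : ℝ) • c) (m - (n : ℝ) • c)
    have hyoung : 0 ≤ (ε * (n * ‖c‖) - ‖m - (n : ℝ) • c‖) ^ 2 / ε := by positivity
    calc ‖m‖ ^ 2 ≤ (n * ‖c‖ + ‖m - (n : ℝ) • c‖) ^ 2 := by gcongr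
      _ ≤ _ := by
        refine le_of_sub_nonneg (hyoung.trans_eq ?_)
        field_simp
        ring
  calc ∫ θ, ‖gradient F θ‖ ^ 2 ∂sphMeasure n = ‖m‖ ^ 2 + V := by linarith
    _ ≤ (1 + ε) * (n ^ 2 * ‖c‖ ^ 2) +
        (1 + 1 / ε) * (n / ((n : ℝ) - 1) ^ 2 * (H / (n - 1))) + H / (n - 1) := by
      refine add_le_add (hm.trans ?_) hV
      gcongr
      exact hmean.trans (by gcongr)
    _ = _ := by
      field_simp
      ring

end GradientSecondMoment

section HighDimension

open ProbabilityTheory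

variable {F : E n → ℝ}

lemma norm_sgrad_norm_gradient_sq_le (hF : ContDiff ℝ 2 F) {θ : E n} (hθ : ‖θ‖ = 1)
    (hop : ‖hess F θ‖ ≤ 1) :
    ‖sgrad (fun θ ↦ ‖gradient F θ‖ ^ 2) θ‖ ^ 2 ≤ 4 * ‖gradient F θ‖ ^ 2 := by
  have hgrad : ‖gradient (fun θ ↦ ‖gradient F θ‖ ^ 2) θ‖ ≤ 2 * ‖gradient F θ‖ := by
    rw [gradient, LinearIsometryEquiv.norm_map, (hasFDerivAt_gradient hF θ).norm_sq.fderiv]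
    refine ContinuousLinearMap.opNorm_le_bound _ (by positivity) fun v ↦ ?_
    have hinner := (norm_inner_le_norm (𝕜 := ℝ) (gradient F θ) (hess F θ v)).trans
      (mul_le_mul_of_nonneg_left ((hess F θ).le_of_opNorm_le hop v) (norm_nonneg _))
    simpa [mul_assoc] using hinner
  calc ‖sgrad (fun θ ↦ ‖gradient F θ‖ ^ 2) θ‖ ^ 2
      ≤ ‖gradient (fun θ ↦ ‖gradient F θ‖ ^ 2) θ‖ ^ 2 := norm_sgrad_sq_le _ hθ
    _ ≤ (2 * ‖gradient F θ‖) ^ 2 := by gcongr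
    _ = 4 * ‖gradient F θ‖ ^ 2 := by ring

lemma integral_exp_mul_sub_integral_le (hn : 3 ≤ n) (hF : ContDiff ℝ 2 F)
    (hop : ∀ θ, ‖θ‖ = 1 → ‖hess F θ‖ ≤ 1) {v s : ℝ} (hv : v = 1 / ((n : ℝ) - 2)) (hs : 0 < s)
    (hs' : 2 * (v * s) ^ 2 < 1) :
    ∫ θ, Real.exp (s * (F θ - ∫ η, F η ∂sphMeasure n)) ∂sphMeasure n ≤
      Real.exp (s ^ 2 * (v * (∫ θ, ‖gradient F θ‖ ^ 2 ∂sphMeasure n) / (1 - 2 * (v * s) ^ 2))) := by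
  have : NeZero n := ⟨by omega⟩
  have hcgf := cgf_le_of_sgrad_gradient_sq_le hn (hF.of_le (by norm_num))
    ((contDiff_gradient hF).norm_sq ℝ)
    (fun θ hθ ↦ norm_sgrad_norm_gradient_sq_le hF hθ (hop θ hθ)) hv hs hs'
  have hFc := hF.continuous
  set m := ∫ η, F η ∂sphMeasure n
  calc ∫ θ, Real.exp (s * (F θ - m)) ∂sphMeasure n
      = Real.exp (-(s * m)) * mgf F (sphMeasure n) s := by
        rw [mgf, ← integral_const_mul]
        congr! 2
        rw [← Real.exp_add]
        ring_nf
    _ = Real.exp (-(s * m) + cgf F (sphMeasure n) s) := by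
        rw [Real.exp_add, exp_cgf (integrable_sphMeasure (by fun_prop))]
    _ ≤ _ := by
        gcongr
        linarith

lemma gradient_neg (F : E n → ℝ) : gradient (fun x ↦ -F x) = fun x ↦ -gradient F x :=
  funext fun x ↦ by simp [gradient, fderiv_fun_neg]

lemma hess_neg (F : E n → ℝ) (θ : E n) : hess (fun x ↦ -F x) θ = -hess F θ := by
  rw [hess, gradient_neg, fderiv_fun_neg, hess]

lemma integral_exp_mul_abs_sub_integral_le (hn : 3 ≤ n) (hF : ContDiff ℝ 2 F)
    (hop : ∀ θ, ‖θ‖ = 1 → ‖hess F θ‖ ≤ 1) {v s : ℝ} (hv : v = 1 / ((n : ℝ) - 2)) (hs : 0 < s)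
    (hs' : 2 * (v * s) ^ 2 < 1) :
    ∫ θ, Real.exp (s * |F θ - ∫ η, F η ∂sphMeasure n|) ∂sphMeasure n ≤
      2 * Real.exp (s ^ 2 * (v * (∫ θ, ‖gradient F θ‖ ^ 2 ∂sphMeasure n) /
        (1 - 2 * (v * s) ^ 2))) := by
  have : NeZero n := ⟨by omega⟩
  have hupper := integral_exp_mul_sub_integral_le hn hF hop hv hs hs'
  have hlower := integral_exp_mul_sub_integral_le hn hF.neg
    (by simpa only [hess_neg, norm_neg] using hop) hv hs hs'
  simp only [gradient_neg, norm_neg, integral_neg] at hlower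
  have hFc := hF.continuous
  set m := ∫ η, F η ∂sphMeasure n
  have hsum := (hasBochnerIntegral_sphMeasure (w := fun θ ↦ Real.exp (s * |F θ - m|))
    (by fun_prop)).mono
    ((hasBochnerIntegral_sphMeasure (w := fun θ ↦ Real.exp (s * (F θ - m))) (by fun_prop)).add
      (hasBochnerIntegral_sphMeasure (w := fun θ ↦ Real.exp (s * (-F θ - -m))) (by fun_prop)))
    fun θ ↦ by
      convert Real.exp_abs_le (s * (F θ - m)) using 2
      · rw [abs_mul, abs_of_pos hs]
      · ring_nf
  linarith

lemma integral_exp_rpow_le {Ω : Type*} [MeasurableSpace Ω] {μ : Measure Ω} [IsProbabilityMeasure μ]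
    {u : Ω → ℝ} {p : ℝ} (hp : 1 ≤ p) (hu : Integrable (fun x ↦ Real.exp (u x)) μ)
    (hpu : Integrable (fun x ↦ Real.exp (p * u x)) μ) :
    (∫ x, Real.exp (u x) ∂μ) ^ p ≤ ∫ x, Real.exp (p * u x) ∂μ := by
  have hexp (x : Ω) : Real.exp (p * u x) = Real.exp (u x) ^ p := by rw [← Real.exp_mul, mul_comm]
  simp only [hexp] at hpu ⊢
  exact (convexOn_rpow hp).map_integral_le
    (Real.continuous_rpow_const (by linarith)).continuousOn isClosed_Ici
    (.of_forall fun x ↦ (Real.exp_pos _).le) hu hpu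

lemma two_mul_sq_le {m D s : ℝ} (hm : 1 ≤ m) (hD : 0 < D) (hs : s = 5 / 4 * ((m + 1) / (4 * D))) :
    2 * (1 / m * s) ^ 2 ≤ 25 / 32 / D ^ 2 := by
  have hratio : (m + 1) / m ≤ 2 := by
    rw [div_le_iff₀ (by positivity)]
    linarith
  calc 2 * (1 / m * s) ^ 2 = 2 * ((m + 1) / m * (5 / (16 * D))) ^ 2 := by
        rw [hs]
        field_simp
        norm_num
    _ ≤ 2 * (2 * (5 / (16 * D))) ^ 2 := by gcongr
    _ = 25 / 32 / D ^ 2 := by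
        field_simp
        norm_num

lemma mul_le_log_two_div_four {b₀ b D : ℝ} (hD : D = 1 + b₀ ^ 2 + 4 * b ^ 2) :
    25 / 128 * (8 / 7 * b₀ + 7 * b ^ 2) ≤ Real.log 2 / 4 * (D ^ 2 - 25 / 32) := by
  have hsq : 1 + 2 * b₀ ^ 2 + 8 * b ^ 2 ≤ D ^ 2 := by
    rw [hD]
    nlinarith [sq_nonneg (b₀ ^ 2 + 4 * b ^ 2)]
  calc 25 / 128 * (8 / 7 * b₀ + 7 * b ^ 2)
      ≤ 0.6931 / 4 * (1 + 2 * b₀ ^ 2 + 8 * b ^ 2 - 25 / 32) := by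
        nlinarith [sq_nonneg (b₀ - 0.322), sq_nonneg b]
    _ ≤ Real.log 2 / 4 * (D ^ 2 - 25 / 32) := by
        gcongr
        · nlinarith [sq_nonneg b₀, sq_nonneg b]
        · linarith [Real.log_two_gt_d9]

lemma sq_mul_div_le_log_two_div_four {m D Q b₀ b s : ℝ} (hm : 1 ≤ m)
    (hD : D = 1 + b₀ ^ 2 + 4 * b ^ 2) (hs : s = 5 / 4 * ((m + 1) / (4 * D))) (hQ0 : 0 ≤ Q)
    (hQ : (m + 1) * Q ≤ 8 / 7 * b₀ + 7 * b ^ 2) :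
    s ^ 2 * (1 / m * Q / (1 - 2 * (1 / m * s) ^ 2)) ≤ Real.log 2 / 4 := by
  have hD1 : 1 ≤ D := by
    rw [hD]
    nlinarith [sq_nonneg b₀, sq_nonneg b]
  have hden : 0 < D ^ 2 - 25 / 32 := by nlinarith
  have hratio : (m + 1) / m ≤ 2 := by
    rw [div_le_iff₀ (by positivity)]
    linarith
  have hsub : 1 - 25 / 32 / D ^ 2 = (D ^ 2 - 25 / 32) / D ^ 2 := by field_simp
  have hvs := two_mul_sq_le hm (by linarith) hs
  calc s ^ 2 * (1 / m * Q / (1 - 2 * (1 / m * s) ^ 2))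
      ≤ s ^ 2 * (1 / m * Q / ((D ^ 2 - 25 / 32) / D ^ 2)) := by
        have : 0 < 1 - 25 / 32 / D ^ 2 := hsub ▸ div_pos hden (by positivity)
        rw [← hsub]
        gcongr
    _ = 25 / 256 * ((m + 1) / m) * ((m + 1) * Q) / (D ^ 2 - 25 / 32) := by
        have := hden.ne'
        rw [hs]
        generalize D ^ 2 - 25 / 32 = y at *
        field_simp
        ring
    _ ≤ 25 / 256 * 2 * (8 / 7 * b₀ + 7 * b ^ 2) / (D ^ 2 - 25 / 32) := by gcongr
    _ ≤ Real.log 2 / 4 := by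
        rw [div_le_iff₀ hden]
        linarith [mul_le_log_two_div_four hD]

lemma mul_integral_norm_gradient_sq_le (hn : 3 ≤ n) (hF : ContDiff ℝ 2 F) {b₀ b : ℝ}
    (hb₀ : 0 ≤ b₀) (hlinear : ‖∫ θ, F θ • θ ∂sphMeasure n‖ ^ 2 ≤ b₀ / n ^ 3)
    (hHS : ∫ θ, hsNormSq (hess F θ) ∂sphMeasure n ≤ b ^ 2) :
    ((n : ℝ) - 1) * ∫ θ, ‖gradient F θ‖ ^ 2 ∂sphMeasure n ≤ 8 / 7 * b₀ + 7 * b ^ 2 := by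
  have hn' : (3 : ℝ) ≤ n := by exact_mod_cast hn
  obtain ⟨m, hm⟩ : ∃ m : ℝ, m = n - 1 := ⟨_, rfl⟩
  have hm2 : 2 ≤ m := by linarith
  have : NeZero n := ⟨by omega⟩
  have hmoment := integral_norm_gradient_sq_le (by omega) hF (ε := 1 / 7) (by norm_num)
  have hnm : (n : ℝ) = m + 1 := by linarith
  rw [hnm] at hlinear hmoment ⊢
  simp only [add_sub_cancel_right] at hmoment ⊢
  have hratio : (m + 1) / m ^ 2 ≤ 3 / 4 := by
    rw [div_le_iff₀ (by positivity)]
    nlinarith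
  calc m * ∫ θ, ‖gradient F θ‖ ^ 2 ∂sphMeasure n
      ≤ m * ((1 + 1 / 7) * ((m + 1) ^ 2 * (b₀ / (m + 1) ^ 3)) +
        ((1 + 1 / (1 / 7)) * ((m + 1) / m ^ 3) + 1 / m) * b ^ 2) := by
        refine mul_le_mul_of_nonneg_left (hmoment.trans ?_) (by positivity)
        gcongr
    _ = 8 / 7 * b₀ * (m / (m + 1)) + (8 * ((m + 1) / m ^ 2) + 1) * b ^ 2 := by
        field_simp
        ring
    _ ≤ 8 / 7 * b₀ * 1 + (8 * (3 / 4) + 1) * b ^ 2 := by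
        gcongr
        rw [div_le_one (by positivity)]
        linarith
    _ = 8 / 7 * b₀ + 7 * b ^ 2 := by ring

/- The exponential moment is bounded at `5 / 4` times the required rate `(n - 1) / (4 * D)`, where
it is at most `2 * exp (log 2 / 4) = 2 ^ (5 / 4)`; Jensen's inequality then gives the bound `2`. -/
theorem integral_exp_mul_abs_sub_integral_le_two_of_three_le (hn : 3 ≤ n) (hF : ContDiff ℝ 2 F)
    (hop : ∀ θ, ‖θ‖ = 1 → ‖hess F θ‖ ≤ 1) {b₀ b : ℝ} (hb₀ : 0 ≤ b₀)
    (hlinear : ‖∫ θ, F θ • θ ∂sphMeasure n‖ ^ 2 ≤ b₀ / n ^ 3)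
    (hHS : ∫ θ, hsNormSq (hess F θ) ∂sphMeasure n ≤ b ^ 2) :
    ∫ θ, Real.exp (((n : ℝ) - 1) / (4 * (1 + b₀ ^ 2 + 4 * b ^ 2)) *
      |F θ - ∫ η, F η ∂sphMeasure n|) ∂sphMeasure n ≤ 2 := by
  have : NeZero n := ⟨by omega⟩
  have hn' : (3 : ℝ) ≤ n := by exact_mod_cast hn
  have hFc := hF.continuous
  have hgrad := mul_integral_norm_gradient_sq_le hn hF hb₀ hlinear hHS
  have hQ0 : 0 ≤ ∫ θ, ‖gradient F θ‖ ^ 2 ∂sphMeasure n := integral_nonneg fun θ ↦ by positivity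
  obtain ⟨D, hD⟩ : ∃ D, D = 1 + b₀ ^ 2 + 4 * b ^ 2 := ⟨_, rfl⟩
  have hD1 : 1 ≤ D := by
    rw [hD]
    nlinarith [sq_nonneg b₀, sq_nonneg b]
  obtain ⟨s, hs⟩ : ∃ s, s = 5 / 4 * (((n : ℝ) - 1) / (4 * D)) := ⟨_, rfl⟩
  have hs0 : 0 < s := hs ▸ mul_pos (by norm_num) (div_pos (by linarith) (by positivity))
  rw [show (n : ℝ) - 1 = n - 2 + 1 by ring] at hgrad hs
  have hvs : 2 * (1 / ((n : ℝ) - 2) * s) ^ 2 < 1 := by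
    refine (two_mul_sq_le (by linarith) (by linarith) hs).trans_lt ?_
    rw [div_lt_one (by positivity)]
    nlinarith
  have hmoment := (integral_exp_mul_abs_sub_integral_le hn hF hop rfl hs0 hvs).trans
    (mul_le_mul_of_nonneg_left (Real.exp_le_exp.2
      (sq_mul_div_le_log_two_div_four (by linarith) hD hs hQ0 hgrad)) zero_le_two)
  have hjensen := integral_exp_rpow_le (μ := sphMeasure n) (p := 5 / 4) (by norm_num)
    (u := fun θ ↦ ((n : ℝ) - 1) / (4 * D) * |F θ - ∫ η, F η ∂sphMeasure n|)
    (integrable_sphMeasure (by fun_prop)) (integrable_sphMeasure (by fun_prop))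
  have hrate : 5 / 4 * (((n : ℝ) - 1) / (4 * D)) = s := by rw [hs]; ring
  simp only [← mul_assoc, hrate] at hjensen
  have hpow : 2 * Real.exp (Real.log 2 / 4) = 2 ^ (5 / 4 : ℝ) := by
    rw [show (5 / 4 : ℝ) = 1 + 1 / 4 by norm_num, Real.rpow_add two_pos, Real.rpow_one,
      Real.rpow_def_of_pos two_pos (1 / 4), mul_one_div]
  rw [← hD]
  exact (Real.rpow_le_rpow_iff (integral_nonneg fun θ ↦ (Real.exp_pos _).le) zero_le_two
    (by norm_num : (0 : ℝ) < 5 / 4)).1 (hjensen.trans (hmoment.trans_eq hpow))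

end HighDimension

section Circle

open ProbabilityTheory

/-- The point of the unit circle at angle `t`. -/
def circlePoint (t : ℝ) : E 2 := !₂[Real.cos t, Real.sin t]

lemma circlePoint_eq (t : ℝ) :
    circlePoint t = Complex.orthonormalBasisOneI.repr (Real.cos t + Real.sin t * Complex.I) := by
  ext i
  fin_cases i <;> simp [circlePoint, Complex.cos_ofReal_re, Complex.sin_ofReal_re]

lemma norm_circlePoint (t : ℝ) : ‖circlePoint t‖ = 1 := by
  simp [circlePoint, EuclideanSpace.norm_eq]

lemma hasDerivAt_circlePoint (t : ℝ) :
    HasDerivAt circlePoint (circlePoint (t + Real.pi / 2)) t := by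
  refine (PiLp.continuousLinearEquiv 2 ℝ (fun _ : Fin 2 ↦ ℝ)).symm.hasFDerivAt.comp_hasDerivAt t
    (f := fun t ↦ ![Real.cos t, Real.sin t]) (hasDerivAt_pi.2 fun i ↦ ?_)
  fin_cases i
  · simpa [Real.cos_add_pi_div_two] using Real.hasDerivAt_cos t
  · simpa [Real.sin_add_pi_div_two] using Real.hasDerivAt_sin t

lemma continuous_circlePoint : Continuous circlePoint :=
  continuous_iff_continuousAt.2 fun t ↦ (hasDerivAt_circlePoint t).continuousAt

lemma periodic_circlePoint : Function.Periodic circlePoint (2 * Real.pi) := fun t ↦ by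
  simp [circlePoint]

-- Evaluate the Gaussian integral of `θ ↦ G (θ / ‖θ‖)` in polar coordinates.
lemma exists_integral_sphMeasure_two_eq_mul : ∃ K : ℝ, ∀ G : E 2 → ℝ, Continuous G →
    ∫ θ, G θ ∂sphMeasure 2 = K * ∫ t in Set.Ioo (-Real.pi) Real.pi, G (circlePoint t) := by
  set d : ℝ → ℝ := fun r ↦ (2 * Real.pi) ^ (-(Module.finrank ℝ (E 2) : ℝ) / 2) *
    Real.exp (-(1 / 2) * r ^ 2)
  have hd0 (r : ℝ) : 0 ≤ d r := by positivity
  refine ⟨∫ r in Set.Ioi (0 : ℝ), r * d r, fun G hG ↦ ?_⟩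
  have hgauss := (hasBochnerIntegral_sphMeasure hG).angular.2
  rw [← hgauss, stdGaussian_eq_withDensity, integral_withDensity_eq_integral_toReal_smul
      (by fun_prop) (by simp),
    ← Complex.orthonormalBasisOneI.measurePreserving_repr.integral_comp
      Complex.orthonormalBasisOneI.repr.toHomeomorph.measurableEmbedding,
    ← Complex.integral_comp_polarCoord_symm, polarCoord_target, Measure.volume_eq_prod,
    ← setIntegral_prod_mul]
  refine setIntegral_congr_fun (measurableSet_Ioi.prod measurableSet_Ioo) fun p hp ↦ ?_
  have hp0 : 0 < p.1 := hp.1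
  simp only [LinearIsometryEquiv.norm_map, Complex.norm_polarCoord_symm, abs_of_pos hp0]
  rw [ENNReal.toReal_ofReal (hd0 p.1), circlePoint_eq, Complex.polarCoord_symm_apply,
    ← map_smul, ← Complex.real_smul, inv_smul_smul₀ hp0.ne', smul_eq_mul, smul_eq_mul]
  ring

lemma integral_sphMeasure_two {G : E 2 → ℝ} (hG : Continuous G) :
    ∫ θ, G θ ∂sphMeasure 2 =
      (2 * Real.pi)⁻¹ * ∫ t in (-Real.pi)..Real.pi, G (circlePoint t) := by
  obtain ⟨K, hK⟩ := exists_integral_sphMeasure_two_eq_mul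
  have hπ := Real.pi_pos
  have hone : 1 = K * (2 * Real.pi) := by
    simpa [← two_mul, hπ.le] using hK (fun _ ↦ 1) continuous_const
  rw [hK G hG, intervalIntegral.integral_of_le (by linarith), integral_Ioc_eq_integral_Ioo,
    eq_inv_of_mul_eq_one_left hone.symm]

lemma integral_circlePoint_period {G : E 2 → ℝ} (hG : Continuous G) (t : ℝ) :
    ∫ x in (t - 2 * Real.pi)..t, G (circlePoint x) = 2 * Real.pi * ∫ θ, G θ ∂sphMeasure 2 := by
  have hshift := (periodic_circlePoint.comp G).intervalIntegral_add_eq (t - 2 * Real.pi) (-Real.pi)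
  rw [sub_add_cancel, show -Real.pi + 2 * Real.pi = Real.pi by ring] at hshift
  rw [integral_sphMeasure_two hG, mul_inv_cancel_left₀ Real.two_pi_pos.ne']
  exact hshift

-- Integrate by parts against the weight `x - (t - T / 2)`, which has mean zero over the period.
lemma abs_mul_sub_integral_le_of_periodic {g g' : ℝ → ℝ} {T : ℝ} (hT : 0 ≤ T)
    (hg : Function.Periodic g T) (hder : ∀ x, HasDerivAt g (g' x) x) (hg' : Continuous g') (t : ℝ) :
    |T * g t - ∫ x in (t - T)..t, g x| ≤ T ^ 3 / 24 + (∫ x in (t - T)..t, g' x ^ 2) / 2 := by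
  have hparts := intervalIntegral.integral_mul_deriv_eq_deriv_mul (a := t - T) (b := t)
    (u := fun x ↦ x - (t - T / 2)) (u' := fun _ ↦ 1)
    (fun x _ ↦ (hasDerivAt_id x).sub_const _) (fun x _ ↦ hder x)
    (by simp) (hg'.intervalIntegrable _ _)
  have hweight : Continuous fun x ↦ 1 / 2 * (x - (t - T / 2)) ^ 2 := by fun_prop
  have hderiv : Continuous fun x ↦ 1 / 2 * g' x ^ 2 := by fun_prop
  calc |T * g t - ∫ x in (t - T)..t, g x|
      = |∫ x in (t - T)..t, (x - (t - T / 2)) * g' x| := by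
        rw [hparts, hg.sub_eq]
        simp only [one_mul]
        ring_nf
    _ ≤ ∫ x in (t - T)..t, (1 / 2 * (x - (t - T / 2)) ^ 2 + 1 / 2 * g' x ^ 2) := by
        rw [← Real.norm_eq_abs]
        refine intervalIntegral.norm_integral_le_of_norm_le (by linarith) (.of_forall fun x _ ↦ ?_)
          ((hweight.add hderiv).intervalIntegrable _ _)
        rw [Real.norm_eq_abs, abs_le]
        constructor
        · linarith [sq_nonneg (x - (t - T / 2) + g' x)]
        · linarith [sq_nonneg (x - (t - T / 2) - g' x)]
    _ = T ^ 3 / 24 + (∫ x in (t - T)..t, g' x ^ 2) / 2 := by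
        rw [intervalIntegral.integral_add (hweight.intervalIntegrable _ _)
            (hderiv.intervalIntegrable _ _),
          intervalIntegral.integral_const_mul, intervalIntegral.integral_const_mul,
          intervalIntegral.integral_comp_sub_right (fun x ↦ x ^ 2), integral_pow]
        push_cast
        ring

lemma abs_sub_integral_le {F : E 2 → ℝ} (hF : ContDiff ℝ 1 F) (t : ℝ) :
    |F (circlePoint t) - ∫ θ, F θ ∂sphMeasure 2| ≤
      Real.pi ^ 2 / 6 + (∫ θ, ‖gradient F θ‖ ^ 2 ∂sphMeasure 2) / 2 := by
  have hgc := continuous_gradient hF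
  have hcc := continuous_circlePoint
  have hder (x : ℝ) : HasDerivAt (fun x ↦ F (circlePoint x))
      ⟪gradient F (circlePoint x), circlePoint (x + Real.pi / 2)⟫ x := by
    rw [inner_gradient]
    exact (hF.differentiable one_ne_zero _).hasFDerivAt.comp_hasDerivAt x (hasDerivAt_circlePoint x)
  have hcont : Continuous fun x ↦
      ⟪gradient F (circlePoint x), circlePoint (x + Real.pi / 2)⟫ := by fun_prop
  have hperiod := abs_mul_sub_integral_le_of_periodic Real.two_pi_pos.le
    (periodic_circlePoint.comp F) hder hcont t
  have hgrad : ∫ x in (t - 2 * Real.pi)..t,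
      ⟪gradient F (circlePoint x), circlePoint (x + Real.pi / 2)⟫ ^ 2 ≤
      2 * Real.pi * ∫ θ, ‖gradient F θ‖ ^ 2 ∂sphMeasure 2 := by
    rw [← integral_circlePoint_period (G := fun θ ↦ ‖gradient F θ‖ ^ 2) (by fun_prop)]
    refine intervalIntegral.integral_mono (by linarith [Real.pi_pos])
      (Continuous.intervalIntegrable (by fun_prop) _ _)
      (Continuous.intervalIntegrable (by fun_prop) _ _) fun x ↦ sq_le_sq.2 ?_
    simpa [norm_circlePoint] using
      abs_real_inner_le_norm (gradient F (circlePoint x)) (circlePoint (x + Real.pi / 2))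
  simp only [Function.comp_apply] at hperiod
  rw [integral_circlePoint_period hF.continuous, ← mul_sub, abs_mul,
    abs_of_pos Real.two_pi_pos] at hperiod
  refine le_of_mul_le_mul_left (hperiod.trans ?_) Real.two_pi_pos
  linarith

theorem integral_exp_mul_abs_sub_integral_le_two_of_eq_two {F : E 2 → ℝ} (hF : ContDiff ℝ 2 F)
    {b₀ b : ℝ} (hlinear : ‖∫ θ, F θ • θ ∂sphMeasure 2‖ ^ 2 ≤ b₀ / 2 ^ 3)
    (hHS : ∫ θ, hsNormSq (hess F θ) ∂sphMeasure 2 ≤ b ^ 2) :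
    ∫ θ, Real.exp (1 / (4 * (1 + b₀ ^ 2 + 4 * b ^ 2)) * |F θ - ∫ η, F η ∂sphMeasure 2|)
      ∂sphMeasure 2 ≤ 2 := by
  have hFc := hF.continuous
  have hcc := continuous_circlePoint
  have hgrad : ∫ θ, ‖gradient F θ‖ ^ 2 ∂sphMeasure 2 ≤ b₀ + 5 * b ^ 2 := by
    have := integral_norm_gradient_sq_le le_rfl hF one_pos
    norm_num at this hlinear
    linarith
  have hsup (t : ℝ) : 1 / (4 * (1 + b₀ ^ 2 + 4 * b ^ 2)) *
      |F (circlePoint t) - ∫ η, F η ∂sphMeasure 2| ≤ Real.log 2 := by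
    have hpi : Real.pi ^ 2 ≤ 3.15 ^ 2 := by
      gcongr
      exact Real.pi_lt_d2.le
    rw [div_mul_eq_mul_div, one_mul, div_le_iff₀ (by positivity)]
    calc |F (circlePoint t) - ∫ η, F η ∂sphMeasure 2|
        ≤ Real.pi ^ 2 / 6 + (∫ θ, ‖gradient F θ‖ ^ 2 ∂sphMeasure 2) / 2 :=
          abs_sub_integral_le (hF.of_le (by norm_num)) t
      _ ≤ 0.6931 * (4 * (1 + b₀ ^ 2 + 4 * b ^ 2)) := by
          nlinarith [sq_nonneg (b₀ - 0.2), sq_nonneg b]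
      _ ≤ Real.log 2 * (4 * (1 + b₀ ^ 2 + 4 * b ^ 2)) := by
          gcongr
          linarith [Real.log_two_gt_d9]
  calc ∫ θ, Real.exp (1 / (4 * (1 + b₀ ^ 2 + 4 * b ^ 2)) * |F θ - ∫ η, F η ∂sphMeasure 2|)
        ∂sphMeasure 2
      ≤ (2 * Real.pi)⁻¹ * ∫ _ in (-Real.pi)..Real.pi, (2 : ℝ) := by
        rw [integral_sphMeasure_two (by fun_prop)]
        refine mul_le_mul_of_nonneg_left (intervalIntegral.integral_mono
          (by linarith [Real.pi_pos]) (Continuous.intervalIntegrable (by fun_prop) _ _) (by simp)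
          fun t ↦ ?_) (by positivity)
        exact (Real.exp_le_exp.2 (hsup t)).trans_eq (Real.exp_log two_pos)
    _ = 2 := by
        rw [intervalIntegral.integral_const, smul_eq_mul, sub_neg_eq_add, ← two_mul,
          inv_mul_cancel_left₀ Real.two_pi_pos.ne']

end Circle

section Localization

open scoped Topology ContDiff Manifold

lemma exists_contDiff_eventuallyEq {f : E n → ℝ} {U K : Set (E n)} (hU : IsOpen U)
    (hK : IsClosed K) (hKU : K ⊆ U) (hf : ContDiffOn ℝ 2 f U) :
    ∃ g : E n → ℝ, ContDiff ℝ 2 g ∧ ∀ θ ∈ K, g =ᶠ[𝓝 θ] f := by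
  obtain ⟨χ, hχ0, hχ1, -⟩ := exists_contMDiffMap_zero_one_nhds_of_isClosed (n := 2)
    (modelWithCornersSelf ℝ (E n)) hU.isClosed_compl hK (Set.disjoint_compl_left_iff_subset.2 hKU)
  have hχ : ContDiff ℝ 2 χ := χ.contMDiff.contDiff
  refine ⟨fun x ↦ χ x * f x, contDiff_iff_contDiffAt.2 fun x ↦ ?_, fun θ hθ ↦ ?_⟩
  · by_cases hx : x ∈ U
    · exact hχ.contDiffAt.mul (hf.contDiffAt (hU.mem_nhds hx))
    · have hzero : (fun x ↦ χ x * f x) =ᶠ[𝓝 x] fun _ ↦ 0 := by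
        filter_upwards [eventually_nhdsSet_iff_forall.1 hχ0 x hx] with y hy
        simp [hy]
      exact contDiffAt_const.congr_of_eventuallyEq hzero
  · filter_upwards [eventually_nhdsSet_iff_forall.1 hχ1 θ hθ] with y hy
    simp [hy]

lemma hess_congr {f g : E n → ℝ} {θ : E n} (h : g =ᶠ[𝓝 θ] f) : hess g θ = hess f θ := by
  refine EventuallyEq.fderiv_eq ?_
  filter_upwards [h.eventuallyEq_nhds] with y hy
  rw [gradient, gradient, hy.fderiv_eq]

end Localization

section Assembly

lemma hess_sub_sq_norm {g : E n → ℝ} (hg : ContDiff ℝ 2 g) (a : ℝ) (θ : E n) :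
    hess (fun x ↦ g x - a / 2 * ‖x‖ ^ 2) θ = hess g θ - a • ContinuousLinearMap.id ℝ (E n) := by
  have hgrad : gradient (fun x ↦ g x - a / 2 * ‖x‖ ^ 2) = fun x ↦ gradient g x - a • x := by
    ext1 x
    refine ext_inner_right ℝ fun y ↦ ?_
    have hgx := (hg.differentiable two_ne_zero x).hasFDerivAt
    have hsq := (hasStrictFDerivAt_norm_sq x).hasFDerivAt.const_mul (a / 2)
    rw [inner_gradient, (hgx.fun_sub hsq).fderiv, inner_sub_left, inner_gradient,
      real_inner_smul_left]
    simp only [sub_apply, smul_apply, innerSL_apply_apply,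
      smul_eq_mul, nsmul_eq_mul]
    ring
  rw [hess, hgrad]
  exact ((hasFDerivAt_gradient hg θ).fun_sub ((hasFDerivAt_id θ).const_smul a)).fderiv

lemma integral_id_sphMeasure [NeZero n] : ∫ θ, θ ∂sphMeasure n = 0 := by
  refine ext_inner_left ℝ fun v ↦ ?_
  have hid : Integrable (fun θ : E n ↦ θ) (sphMeasure n) := integrable_sphMeasure continuous_id
  rw [← integral_inner hid, integral_inner_sphMeasure, inner_zero_right]

lemma integral_integral_inner_mul {f : E n → ℝ}
    (hf : Integrable (fun θ ↦ f θ • θ) (sphMeasure n)) :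
    ∫ x, ∫ y, ⟪x, y⟫ * (f x * f y) ∂sphMeasure n ∂sphMeasure n =
      ‖∫ θ, f θ • θ ∂sphMeasure n‖ ^ 2 := by
  have hinner (x y : E n) : ⟪x, y⟫ * (f x * f y) = ⟪f x • x, f y • y⟫ := by
    rw [real_inner_smul_left, real_inner_smul_right]
    ring
  simp_rw [hinner, integral_inner hf, real_inner_comm (∫ θ, f θ • θ ∂sphMeasure n),
    integral_inner hf, real_inner_self_eq_norm_sq]

theorem integral_exp_mul_abs_sub_integral_le_two (hn : 2 ≤ n) {F : E n → ℝ} (hF : ContDiff ℝ 2 F)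
    (hop : ∀ θ, ‖θ‖ = 1 → ‖hess F θ‖ ≤ 1) {b₀ b : ℝ} (hb₀ : 0 ≤ b₀)
    (hlinear : ‖∫ θ, F θ • θ ∂sphMeasure n‖ ^ 2 ≤ b₀ / n ^ 3)
    (hHS : ∫ θ, hsNormSq (hess F θ) ∂sphMeasure n ≤ b ^ 2) :
    ∫ θ, Real.exp (((n : ℝ) - 1) / (4 * (1 + b₀ ^ 2 + 4 * b ^ 2)) *
      |F θ - ∫ η, F η ∂sphMeasure n|) ∂sphMeasure n ≤ 2 := by
  obtain rfl | hn3 := hn.eq_or_lt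
  · rw [show ((2 : ℕ) : ℝ) - 1 = 1 by norm_num]
    exact integral_exp_mul_abs_sub_integral_le_two_of_eq_two hF hlinear hHS
  · exact integral_exp_mul_abs_sub_integral_le_two_of_three_le hn3 hF hop hb₀ hlinear hHS

theorem integral_exp_mul_abs_sub_integral_le_two_of_sub_smul_id (hn : 2 ≤ n) {g : E n → ℝ}
    (hg : ContDiff ℝ 2 g) {a b₀ b : ℝ} (hb₀ : 0 ≤ b₀)
    (hop : ∀ θ, ‖θ‖ = 1 → ‖hess g θ - a • ContinuousLinearMap.id ℝ (E n)‖ ≤ 1)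
    (hlinear : ‖∫ θ, g θ • θ ∂sphMeasure n‖ ^ 2 ≤ b₀ / n ^ 3)
    (hHS : ∫ θ, hsNormSq (hess g θ - a • ContinuousLinearMap.id ℝ (E n)) ∂sphMeasure n ≤ b ^ 2) :
    ∫ θ, Real.exp (((n : ℝ) - 1) / (4 * (1 + b₀ ^ 2 + 4 * b ^ 2)) *
      |g θ - ∫ η, g η ∂sphMeasure n|) ∂sphMeasure n ≤ 2 := by
  have : NeZero n := ⟨by omega⟩
  have hgc := hg.continuous
  have hF : ContDiff ℝ 2 fun x ↦ g x - a / 2 * ‖x‖ ^ 2 :=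
    hg.sub (contDiff_const.mul (contDiff_norm_sq ℝ))
  have hmean : ∫ θ, (g θ - a / 2 * ‖θ‖ ^ 2) ∂sphMeasure n = ∫ θ, g θ ∂sphMeasure n - a / 2 := by
    trans ∫ θ, (g θ - a / 2) ∂sphMeasure n
    · refine integral_congr_ae ?_
      filter_upwards [ae_sphMeasure_norm_eq_one] with θ hθ
      rw [hθ, one_pow, mul_one]
    · rw [integral_sub (integrable_sphMeasure hgc) (integrable_const _), integral_const,
        probReal_univ, one_smul]
  have hmoment : ∫ θ, (g θ - a / 2 * ‖θ‖ ^ 2) • θ ∂sphMeasure n = ∫ θ, g θ • θ ∂sphMeasure n := by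
    trans ∫ θ, (g θ • θ - (a / 2) • θ) ∂sphMeasure n
    · refine integral_congr_ae ?_
      filter_upwards [ae_sphMeasure_norm_eq_one] with θ hθ
      rw [hθ, one_pow, mul_one, sub_smul]
    · rw [integral_sub (integrable_sphMeasure (by fun_prop)) (integrable_sphMeasure (by fun_prop)),
        integral_smul, integral_id_sphMeasure, smul_zero, sub_zero]
  have hmain := integral_exp_mul_abs_sub_integral_le_two hn hF (b₀ := b₀) (b := b)
    (by simpa only [hess_sub_sq_norm hg] using hop) hb₀ (by rwa [hmoment])
    (by simpa only [hess_sub_sq_norm hg] using hHS)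
  refine (integral_congr_ae ?_).trans_le hmain
  filter_upwards [ae_sphMeasure_norm_eq_one] with θ hθ
  rw [hmean, hθ]
  ring_nf

end Assembly

/-- **Theorem 1.3 (Statement 2).** Second order concentration on the sphere without
orthogonality to linear functions, under a correlation-type condition. -/
theorem second_order_concentration_with_linear_part
    {n : ℕ} (hn : 2 ≤ n) (f : E n → ℝ) (U : Set (E n)) (hU : IsOpen U)
    (hUS : Metric.sphere (0 : E n) 1 ⊆ U) (hf : ContDiffOn ℝ 2 f U)
    (hmean : ∫ θ, f θ ∂sphMeasure n = 0)
    {b₀ : ℝ} (hb₀ : 0 ≤ b₀)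
    (hcorr : ∫ x, ∫ y, ⟪x, y⟫ * (f x * f y) ∂sphMeasure n ∂sphMeasure n ≤ b₀ / (n : ℝ) ^ 3)
    {a b : ℝ} (hb : 0 ≤ b)
    (hop : ∀ θ ∈ Metric.sphere (0 : E n) 1,
      ‖hess f θ - a • ContinuousLinearMap.id ℝ (E n)‖ ≤ 1)
    (hHS : ∫ θ, hsNormSq (hess f θ - a • ContinuousLinearMap.id ℝ (E n)) ∂sphMeasure n ≤ b ^ 2) :
    ∫ θ, Real.exp (((n : ℝ) - 1) / (4 * (1 + b₀ ^ 2 + 4 * b ^ 2)) * |f θ|) ∂sphMeasure n ≤ 2 := by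
  have : NeZero n := ⟨by omega⟩
  obtain ⟨g, hg, hgf⟩ := exists_contDiff_eventuallyEq hU isClosed_sphere hUS hf
  have hsphere : ∀ᵐ θ ∂sphMeasure n, θ ∈ sphere (0 : E n) 1 :=
    ae_sphMeasure_norm_eq_one.mono fun _ ↦ mem_sphere_zero_iff_norm.2
  have hfg : f =ᵐ[sphMeasure n] g := hsphere.mono fun θ hθ ↦ (hgf θ hθ).eq_of_nhds.symm
  have hfg_smul : (fun θ ↦ f θ • θ) =ᵐ[sphMeasure n] fun θ ↦ g θ • θ :=
    hfg.mono fun θ hθ ↦ congrArg (· • θ) hθ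
  have hgc := hg.continuous
  rw [integral_integral_inner_mul ((integrable_sphMeasure (by fun_prop)).congr hfg_smul.symm),
    integral_congr_ae hfg_smul] at hcorr
  rw [integral_congr_ae (hsphere.mono fun θ hθ ↦ by rw [← hess_congr (hgf θ hθ)])] at hHS
  have hmain := integral_exp_mul_abs_sub_integral_le_two_of_sub_smul_id hn hg hb₀ (fun θ hθ ↦
    hess_congr (hgf θ (mem_sphere_zero_iff_norm.2 hθ)) ▸ hop θ (mem_sphere_zero_iff_norm.2 hθ))
    hcorr hHS
  rw [← integral_congr_ae hfg, hmean] at hmain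
  refine (integral_congr_ae (hfg.mono fun θ hθ ↦ ?_)).trans_le hmain
  simp only [hθ, sub_zero]

end SecondOrderConc
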